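/- arXiv:1507.07831 — 3 statements merged into one kernel-verified Lean document; each statement's English description precedes it below -/
import Mathlib

section
/- Principal-value formula for the derivative of the single-layer-type operator in a chart: let d ≥ 3, γ ∈ (0,1), μ ≥ 1, r₀ > 0, a₀ ∈ ℝ^{d-1}, and let Z : B(a₀, 6r₀) ⊂ ℝ^{d-1} → ℝ^d be continuously differentiable with (1/μ)|a-b| ≤ |Z(a)-Z(b)| for all a,b, and with γ-Hölder derivative DZ. Set M(a,b) = |Z(a)-Z(b)|^{2-d}, and for a γ-Hölder function f compactly supported in B(a₀, 3r₀) define Tf(a) = ∫_{B(a₀,6r₀)} M(a,b) f(b) db. Then for each 1 ≤ j ≤ d-1 and each a, the principal value p.v. ∫_{B(a₀,6r₀)} ∂M/∂a_j(a,b) f(b) db := lim_{ε↓0} ∫_{{b : |b-a|>ε}} ∂M/∂a_j(a,b) f(b) db exists, where ∂M/∂a_j(a,b) = (2-d)(Z(a)-Z(b))·∂_j Z(a) / |Z(a)-Z(b)|^d, and it equals the distributional partial derivative ∂_j Tf on B(a₀,6r₀): for every smooth g compactly supported in B(a₀,6r₀), -∫ Tf(a) ∂_j g(a) da = ∫ (p.v.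 ∫ ∂M/∂a_j(a,b) f(b) db) g(a) da. -/
open MeasureTheory Metric Set
open scoped RealInnerProductSpace

section PV
variable {m : ℕ}

/-- symmetrized integral -/
noncomputable def symInt (G : EuclideanSpace ℝ (Fin m) → ℝ) (a : EuclideanSpace ℝ (Fin m))
    (r : ℝ) : ℝ :=
  (∫ b in (ball a r)ᶜ, G b) + (1/2) * ∫ h in ball (0 : EuclideanSpace ℝ (Fin m)) r,
    (G (a + h) + G (a - h))

lemma symInt_eq (G : EuclideanSpace ℝ (Fin m) → ℝ) (a : EuclideanSpace ℝ (Fin m))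
    (r : ℝ) (hG : Integrable G) : ∫ b, G b = symInt G a r := by
  unfold symInt
  have h1 : ∫ h in ball (0 : EuclideanSpace ℝ (Fin m)) r, G (a + h) = ∫ b in ball a r, G b := by
    rw [← integral_indicator measurableSet_ball, ← integral_indicator measurableSet_ball,
      ← integral_add_left_eq_self ((ball a r).indicator _) a]
    congr 1
    ext h
    simp [indicator, dist_eq_norm]
  have h2 : ∫ h in ball (0 : EuclideanSpace ℝ (Fin m)) r, G (a - h) = ∫ b in ball a r, G b := by
    rw [← integral_indicator measurableSet_ball, ← integral_indicator measurableSet_ball,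
      ← integral_sub_left_eq_self ((ball a r).indicator _) _ a]
    congr 1
    ext h
    simp [indicator, dist_eq_norm]
  rw [integral_add, h1, h2, ← integral_add_compl (measurableSet_ball (x := a) (ε := r)) hG]
  · ring
  · exact (hG.comp_add_left a).integrableOn
  · exact (hG.comp_sub_left a).integrableOn

lemma integrableOn_pow (hm : 1 ≤ m) {α r : ℝ} (hα : α < m) :
    IntegrableOn (fun h : EuclideanSpace ℝ (Fin m) => ‖h‖ ^ (-α)) (ball 0 r) := by
  apply integrableOn_ball_of_norm_le_rpow (C := 1) (α := α) (by simpa using hm)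
    (by simpa using hα)
  · refine Filter.Eventually.of_forall fun x => ?_
    rw [one_mul, Real.norm_of_nonneg (by positivity)]
  · exact (measurable_norm.pow_const _).aestronglyMeasurable

lemma symInt_bound (hm : 1 ≤ m) (G : EuclideanSpace ℝ (Fin m) → ℝ)
    (a : EuclideanSpace ℝ (Fin m)) (r : ℝ) (S : Set (EuclideanSpace ℝ (Fin m)))
    (hS : MeasurableSet S) (hSf : volume S ≠ ⊤)
    (C α : ℝ) (hα : α < m)
    (h1 : ∀ b, b ∉ ball a r → |G b| ≤ S.indicator (fun _ => C) b)
    (h2 : ∀ h, h ≠ 0 → h ∈ ball (0 : EuclideanSpace ℝ (Fin m)) r →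
      |G (a + h) + G (a - h)| ≤ C * ‖h‖ ^ (-α)) :
    |symInt G a r| ≤ (∫ b, S.indicator (fun _ => |C|) b)
      + (1/2) * ∫ h in ball (0 : EuclideanSpace ℝ (Fin m)) r, |C| * ‖h‖ ^ (-α) := by
  have : Nonempty (Fin m) := ⟨⟨0, by omega⟩⟩
  have hI : Integrable (S.indicator (fun _ => |C|) : EuclideanSpace ℝ (Fin m) → ℝ) := by
    rw [integrable_indicator_iff hS]
    exact integrableOn_const hSf
  unfold symInt
  refine (abs_add_le _ _).trans ?_
  rw [abs_mul, abs_of_pos (by norm_num : (0:ℝ) < 1/2)]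
  gcongr
  · rw [← Real.norm_eq_abs]
    refine (norm_integral_le_of_norm_le hI.integrableOn ?_).trans
      (setIntegral_le_integral hI ?_)
    · filter_upwards [ae_restrict_mem measurableSet_ball.compl] with b hb
      refine (h1 b hb).trans ?_
      by_cases hbS : b ∈ S <;> simp [hbS, le_abs_self]
    · refine Filter.Eventually.of_forall fun b => ?_
      by_cases hbS : b ∈ S <;> simp [hbS]
  · rw [← Real.norm_eq_abs]
    refine norm_integral_le_of_norm_le ((integrableOn_pow hm hα).const_mul _) ?_
    have h0 : ∀ᵐ h ∂(volume.restrict (ball (0 : EuclideanSpace ℝ (Fin m)) r)), h ≠ 0 :=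
      ae_restrict_of_ae (Measure.ae_ne volume 0)
    filter_upwards [ae_restrict_mem measurableSet_ball, h0] with h hh hh0
    refine (h2 h hh0 hh).trans ?_
    gcongr
    exact le_abs_self _

lemma symInt_tendsto (hm : 1 ≤ m) {ι : Type*} (l : Filter ι) [l.IsCountablyGenerated]
    (Gk : ι → EuclideanSpace ℝ (Fin m) → ℝ)
    (G : EuclideanSpace ℝ (Fin m) → ℝ)
    (a : EuclideanSpace ℝ (Fin m)) (r : ℝ) (hr : 0 < r) (S : Set (EuclideanSpace ℝ (Fin m)))
    (hS : MeasurableSet S) (hSf : volume S ≠ ⊤)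
    (C α : ℝ) (hα : α < m)
    (hInteg : ∀ᶠ k in l, Integrable (Gk k))
    (h1 : ∀ᶠ k in l, ∀ b, b ∉ ball a r → |Gk k b| ≤ S.indicator (fun _ => C) b)
    (h2 : ∀ᶠ k in l, ∀ h, h ≠ 0 → h ∈ ball (0 : EuclideanSpace ℝ (Fin m)) r →
      |Gk k (a + h) + Gk k (a - h)| ≤ C * ‖h‖ ^ (-α))
    (hlim : ∀ b, b ≠ a → Filter.Tendsto (fun k => Gk k b) l (nhds (G b))) :
    Filter.Tendsto (fun k => ∫ b, Gk k b) l (nhds (symInt G a r)) := by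
  have : Nonempty (Fin m) := ⟨⟨0, by omega⟩⟩
  have hI : Integrable (S.indicator (fun _ => C) : EuclideanSpace ℝ (Fin m) → ℝ) := by
    rw [integrable_indicator_iff hS]
    exact integrableOn_const hSf
  have key : Filter.Tendsto (fun k => symInt (Gk k) a r) l (nhds (symInt G a r)) := by
    unfold symInt
    refine Filter.Tendsto.add ?_ (Filter.Tendsto.const_mul _ ?_)
    · refine tendsto_integral_filter_of_dominated_convergence (S.indicator (fun _ => C)) ?_ ?_
        hI.integrableOn ?_
      · filter_upwards [hInteg] with k hk using hk.1.restrict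
      · filter_upwards [h1] with k hk
        filter_upwards [ae_restrict_mem measurableSet_ball.compl] with b hb using hk b hb
      · filter_upwards [ae_restrict_mem measurableSet_ball.compl] with b hb
        apply hlim
        rintro rfl
        exact hb (mem_ball_self hr)
    · have h0 : ∀ᵐ h ∂(volume.restrict (ball (0 : EuclideanSpace ℝ (Fin m)) r)), h ≠ 0 :=
        ae_restrict_of_ae (Measure.ae_ne volume 0)
      refine tendsto_integral_filter_of_dominated_convergence (fun h => C * ‖h‖ ^ (-α)) ?_ ?_
        ((integrableOn_pow hm hα).const_mul _) ?_
      · filter_upwards [hInteg] with k hk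
        exact ((hk.comp_add_left a).add (hk.comp_sub_left a)).1.restrict
      · filter_upwards [h2] with k hk
        filter_upwards [ae_restrict_mem measurableSet_ball, h0] with h hh hh0 using hk h hh0 hh
      · filter_upwards [h0] with h hh
        exact (hlim _ (by simpa using hh)).add (hlim _ (by simpa using hh))
  refine key.congr' ?_
  filter_upwards [hInteg] with k hk
  exact (symInt_eq _ a r hk).symm

end PV

section Kernel
set_option linter.unusedSectionVars false
variable {F : Type*} [NormedAddCommGroup F] [InnerProductSpace ℝ F]

noncomputable def sreg (ε : ℝ) (u : F) : ℝ := √(‖u‖ ^ 2 + ε ^ 2)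

lemma sreg_zero (u : F) : sreg 0 u = ‖u‖ := by simp [sreg]

lemma norm_le_sreg (ε : ℝ) (u : F) : ‖u‖ ≤ sreg ε u := by
  apply Real.le_sqrt_of_sq_le
  nlinarith [sq_nonneg ε]

lemma sreg_neg (ε : ℝ) (u : F) : sreg ε (-u) = sreg ε u := by simp [sreg]

lemma sreg_pos {ε : ℝ} (hε : ε ≠ 0) (u : F) : 0 < sreg ε u := by
  unfold sreg; positivity

lemma sreg_lip (ε : ℝ) (u v : F) : |sreg ε u - sreg ε v| ≤ ‖u - v‖ := by
  have key : ∀ u v : F, sreg ε u ≤ sreg ε v + ‖u - v‖ := by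
    intro u v
    have h1 := norm_le_sreg ε v
    have h2 : sreg ε v ^ 2 = ‖v‖ ^ 2 + ε ^ 2 := Real.sq_sqrt (by positivity)
    have h3 : ‖u‖ ≤ ‖v‖ + ‖u - v‖ := by
      calc ‖u‖ = ‖v + (u - v)‖ := by simp
        _ ≤ _ := norm_add_le _ _
    have h4 := norm_nonneg v
    have h5 := norm_nonneg (u - v)
    have h6 := norm_nonneg u
    conv_lhs => unfold sreg
    apply Real.sqrt_le_iff.2 ⟨by linarith, ?_⟩
    nlinarith
  rw [abs_le]
  have := key u v
  have h := key v u
  rw [norm_sub_rev] at h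
  constructor <;> linarith

noncomputable def kreg (d : ℕ) (ε : ℝ) (w u : F) : ℝ := (2 - (d:ℝ)) * ⟪u, w⟫ / sreg ε u ^ d

lemma kreg_neg (d : ℕ) (ε : ℝ) (w u : F) : kreg d ε w (-u) = - kreg d ε w u := by
  simp [kreg, sreg_neg, neg_div]

lemma kreg_bound (n : ℕ) (ε : ℝ) (w u : F) (t : ℝ) (ht : 0 < t) (hu : t ≤ ‖u‖) :
    |kreg (n+1) ε w u| ≤ |2 - ((n+1:ℕ):ℝ)| * ‖w‖ / t ^ n := by
  have h1 := norm_le_sreg ε u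
  have h2 : 0 < sreg ε u := by linarith
  unfold kreg
  rw [abs_div, abs_mul, abs_of_pos (by positivity : 0 < sreg ε u ^ (n+1)), mul_div_assoc,
    mul_div_assoc]
  refine mul_le_mul_of_nonneg_left ?_ (abs_nonneg _)
  rw [div_le_div_iff₀ (by positivity) (by positivity)]
  calc |⟪u, w⟫| * t ^ n ≤ (‖u‖ * ‖w‖) * t ^ n := by gcongr; exact abs_real_inner_le_norm u w
    _ ≤ (sreg ε u * ‖w‖) * sreg ε u ^ n := by gcongr; linarith
    _ = _ := by ring

lemma kreg_diff (d : ℕ) (hd : 1 ≤ d) (ε : ℝ) (w u v : F) (t : ℝ) (ht : 0 < t) (hu : t ≤ ‖u‖)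
    (hv : t ≤ ‖v‖) :
    |kreg d ε w u - kreg d ε w v| ≤ |2 - (d:ℝ)| * ‖w‖ * (1 + d) * ‖u - v‖ / t ^ d := by
  wlog h : sreg ε v ≤ sreg ε u generalizing u v
  · rw [abs_sub_comm, norm_sub_rev]
    exact this v u hv hu (le_of_not_ge h)
  have hv1 := norm_le_sreg ε v
  have hs' : 0 < sreg ε v := by linarith
  have hs : 0 < sreg ε u := by linarith
  have hlip := sreg_lip ε u v
  have hpow := abs_pow_sub_pow_le (sreg ε u) (sreg ε v) d
  rw [abs_of_pos hs, abs_of_pos hs', max_eq_left h] at hpow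
  have e1 : kreg d ε w u - kreg d ε w v = (2 - (d:ℝ)) *
      (⟪u - v, w⟫ / sreg ε u ^ d - ⟪v, w⟫ * (sreg ε u ^ d - sreg ε v ^ d)
        / (sreg ε u ^ d * sreg ε v ^ d)) := by
    unfold kreg
    rw [inner_sub_left]
    field_simp
    ring
  rw [e1, abs_mul]
  have b1 : |⟪u - v, w⟫ / sreg ε u ^ d| ≤ ‖w‖ * ‖u - v‖ / t ^ d := by
    rw [abs_div, abs_of_pos (by positivity : 0 < sreg ε u ^ d)]
    gcongr
    · rw [mul_comm]; exact abs_real_inner_le_norm _ _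
    · linarith
  have b2 : |⟪v, w⟫ * (sreg ε u ^ d - sreg ε v ^ d) / (sreg ε u ^ d * sreg ε v ^ d)|
      ≤ ‖w‖ * d * ‖u - v‖ / t ^ d := by
    rw [abs_div, abs_of_pos (by positivity : 0 < sreg ε u ^ d * sreg ε v ^ d), abs_mul,
      div_le_div_iff₀ (by positivity) (by positivity)]
    calc |⟪v, w⟫| * |sreg ε u ^ d - sreg ε v ^ d| * t ^ d
        ≤ (‖v‖ * ‖w‖) * (|sreg ε u - sreg ε v| * d * sreg ε u ^ (d-1)) * t ^ d := by
          gcongr; exact abs_real_inner_le_norm _ _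
      _ ≤ (sreg ε u * ‖w‖) * (‖u - v‖ * d * sreg ε u ^ (d-1)) * sreg ε v ^ d := by
          gcongr <;> linarith
      _ = ‖w‖ * d * ‖u - v‖ * ((sreg ε u * sreg ε u ^ (d-1)) * sreg ε v ^ d) := by ring
      _ = _ := by rw [mul_pow_sub_one (by omega)]
  calc _ ≤ |2 - (d:ℝ)| * (‖w‖ * ‖u - v‖ / t ^ d + ‖w‖ * d * ‖u - v‖ / t ^ d) := by
        gcongr
        exact (abs_sub _ _).trans (add_le_add b1 b2)
    _ = _ := by ring

end Kernel

lemma prod_cont {X Y : Type*} [TopologicalSpace X] [TopologicalSpace Y] [R1Space X] [R1Space Y]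
    (k : X × Y → ℝ) (U : Set X) (V : Set Y) (hU : IsOpen U) (hV : IsOpen V)
    (hk : ContinuousOn k (U ×ˢ V)) (g : X → ℝ) (f : Y → ℝ) (hg : Continuous g) (hf : Continuous f)
    (hgc : HasCompactSupport g) (hfc : HasCompactSupport f)
    (hgU : tsupport g ⊆ U) (hfV : tsupport f ⊆ V) :
    Continuous (Function.uncurry fun a b => k (a, b) * f b * g a) ∧
      HasCompactSupport (Function.uncurry fun a b => k (a, b) * f b * g a) := by
  have hsupp : Function.support (Function.uncurry fun a b => k (a, b) * f b * g a) ⊆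
      tsupport g ×ˢ tsupport f := by
    rintro ⟨a, b⟩ h
    simp only [Function.uncurry, Function.mem_support, ne_eq, mul_eq_zero, not_or] at h
    exact ⟨subset_tsupport _ h.2, subset_tsupport _ h.1.2⟩
  have hts : tsupport (Function.uncurry fun a b => k (a, b) * f b * g a) ⊆
      tsupport g ×ˢ tsupport f :=
    closure_minimal hsupp ((isClosed_tsupport g).prod (isClosed_tsupport f))
  refine ⟨?_, HasCompactSupport.of_support_subset_isCompact (hgc.isCompact.prod hfc.isCompact) hsupp⟩
  refine ContinuousOn.continuous_of_tsupport_subset (s := U ×ˢ V) ?_ (hU.prod hV)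
    (hts.trans (prod_mono hgU hfV))
  have : (Function.uncurry fun a b => k (a, b) * f b * g a) =
    fun p : X × Y => k p * f p.2 * g p.1 := by
    ext ⟨a, b⟩; rfl
  rw [this]
  exact (hk.mul (hf.comp continuous_snd).continuousOn).mul (hg.comp continuous_fst).continuousOn

lemma one_cont {X : Type*} [TopologicalSpace X] [R1Space X]
    (k : X → ℝ) (U : Set X) (hU : IsOpen U)
    (hk : ContinuousOn k U) (g : X → ℝ) (hg : Continuous g)
    (hgc : HasCompactSupport g) (hgU : tsupport g ⊆ U) :
    Continuous (fun a => k a * g a) ∧ HasCompactSupport (fun a => k a * g a) := by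
  refine ⟨?_, hgc.mul_left⟩
  exact ContinuousOn.continuous_of_tsupport_subset (s := U) (hk.mul hg.continuousOn) hU
    ((tsupport_mul_subset_right).trans hgU)

section Kernel2
variable {F : Type*} [NormedAddCommGroup F] [InnerProductSpace ℝ F]
set_option linter.unusedSectionVars false

lemma sreg_continuous (ε : ℝ) : Continuous (fun u : F => sreg ε u) := by
  unfold sreg; fun_prop

lemma kreg_tendsto (d : ℕ) (w u : F) (hu : u ≠ 0) :
    Filter.Tendsto (fun ε => kreg d ε w u) (nhdsWithin 0 (Ioi 0)) (nhds (kreg d 0 w u)) := by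
  have : ContinuousAt (fun ε => kreg d ε w u) 0 := by
    unfold kreg sreg
    refine ContinuousAt.div (by fun_prop) (by fun_prop) ?_
    simp [hu]
  exact this.tendsto.mono_left nhdsWithin_le_nhds

noncomputable def mreg (d : ℕ) (ε : ℝ) (u : F) : ℝ := sreg ε u ^ (2 - (d:ℝ))

lemma mreg_tendsto (d : ℕ) (u : F) (hu : u ≠ 0) :
    Filter.Tendsto (fun ε => mreg d ε u) (nhdsWithin 0 (Ioi 0)) (nhds (mreg d 0 u)) := by
  have : ContinuousAt (fun ε => mreg d ε u) 0 := by
    unfold mreg sreg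
    refine ContinuousAt.rpow_const (by fun_prop) (Or.inl ?_)
    simp [hu]
  exact this.tendsto.mono_left nhdsWithin_le_nhds

lemma mreg_bound (d : ℕ) (hd : 2 ≤ d) (ε : ℝ) (u : F) (t : ℝ) (ht : 0 < t) (hu : t ≤ ‖u‖) :
    |mreg d ε u| ≤ t ^ (2 - (d:ℝ)) := by
  have h1 := norm_le_sreg ε u
  have h2 : 0 < sreg ε u := by linarith
  unfold mreg
  rw [abs_of_pos (by positivity)]
  apply Real.rpow_le_rpow_of_nonpos ht (by linarith)
  have : (2:ℝ) ≤ d := by exact_mod_cast hd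
  linarith

lemma mreg_deriv {E : Type*} [NormedAddCommGroup E] [NormedSpace ℝ E] (d : ℕ) (ε : ℝ) (hε : ε ≠ 0)
    (Z : E → F) (a v : E) (c : F) (hZ : DifferentiableAt ℝ Z a) :
    HasLineDerivAt ℝ (fun a => mreg d ε (Z a - c)) (kreg d ε (fderiv ℝ Z a v) (Z a - c)) a v := by
  have e : (fun a => mreg d ε (Z a - c)) =
      fun a => (‖Z a - c‖ ^ 2 + ε ^ 2) ^ ((2 - (d:ℝ)) / 2) := by
    ext a
    unfold mreg sreg
    rw [Real.sqrt_eq_rpow, ← Real.rpow_mul (by positivity)]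
    congr 1; ring
  rw [e]
  have h0 : 0 < ‖Z a - c‖ ^ 2 + ε ^ 2 := by positivity
  have h := (((hZ.hasFDerivAt.sub_const c).norm_sq.add_const (ε ^ 2)).rpow_const
    (p := (2 - (d:ℝ)) / 2) (Or.inl h0.ne')).hasLineDerivAt v
  convert h using 1
  have e2 : (‖Z a - c‖ ^ 2 + ε ^ 2) ^ ((2 - (d:ℝ)) / 2 - 1) = (sreg ε (Z a - c) ^ d)⁻¹ := by
    rw [← Real.rpow_natCast (sreg ε (Z a - c)) d, ← Real.rpow_neg (by unfold sreg; positivity)]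
    unfold sreg
    rw [Real.sqrt_eq_rpow, ← Real.rpow_mul (by positivity)]
    congr 1; ring
  simp [e2, kreg, inner_sub_left]
  ring

end Kernel2

section Chart
variable {n : ℕ} {F : Type*} [NormedAddCommGroup F] [InnerProductSpace ℝ F]

/-- The normalized hypotheses of the theorem. -/
structure ChartHyp (γ μ r L H B Hf : ℝ) (a₀ : EuclideanSpace ℝ (Fin n))
    (Z : EuclideanSpace ℝ (Fin n) → F) (f : EuclideanSpace ℝ (Fin n) → ℝ) : Prop where
  hn : 2 ≤ n
  γpos : 0 < γ
  μpos : 0 < μ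
  rpos : 0 < r
  Hnn : 0 ≤ H
  Hfnn : 0 ≤ Hf
  diff : ∀ a ∈ ball a₀ (6 * r), DifferentiableAt ℝ Z a
  low : ∀ a ∈ ball a₀ (6 * r), ∀ b ∈ ball a₀ (6 * r), μ⁻¹ * ‖a - b‖ ≤ ‖Z a - Z b‖
  hold : ∀ a ∈ ball a₀ (6 * r), ∀ b ∈ ball a₀ (6 * r),
      ‖fderiv ℝ Z a - fderiv ℝ Z b‖ ≤ H * ‖a - b‖ ^ γ
  bdd : ∀ a ∈ ball a₀ (6 * r), ‖fderiv ℝ Z a‖ ≤ L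
  fhold : ∀ a b, |f a - f b| ≤ Hf * ‖a - b‖ ^ γ
  fcont : Continuous f
  fcomp : HasCompactSupport f
  fsupp : tsupport f ⊆ ball a₀ (3 * r)
  fbdd : ∀ a, |f a| ≤ B

variable {γ μ r L H B Hf : ℝ} {a₀ : EuclideanSpace ℝ (Fin n)}
    {Z : EuclideanSpace ℝ (Fin n) → F} {f : EuclideanSpace ℝ (Fin n) → ℝ}

namespace ChartHyp

lemma fzero (hc : ChartHyp γ μ r L H B Hf a₀ Z f) (b : EuclideanSpace ℝ (Fin n))
    (hb : b ∉ ball a₀ (3 * r)) : f b = 0 := image_eq_zero_of_notMem_tsupport fun h => hb (hc.fsupp h)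

lemma fzero' (hc : ChartHyp γ μ r L H B Hf a₀ Z f) (b : EuclideanSpace ℝ (Fin n))
    (hb : b ∉ ball a₀ (6 * r)) : f b = 0 :=
  hc.fzero b fun h => hb (ball_subset_ball (by linarith [hc.rpos]) h)

lemma fsupp' (hc : ChartHyp γ μ r L H B Hf a₀ Z f) : tsupport f ⊆ ball a₀ (6 * r) :=
  hc.fsupp.trans (ball_subset_ball (by linarith [hc.rpos]))

lemma Lnn (hc : ChartHyp γ μ r L H B Hf a₀ Z f) : 0 ≤ L :=
  (norm_nonneg _).trans (hc.bdd a₀ (mem_ball_self (by linarith [hc.rpos])))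

lemma Bnn (hc : ChartHyp γ μ r L H B Hf a₀ Z f) : 0 ≤ B := (abs_nonneg _).trans (hc.fbdd a₀)

lemma taylor (hc : ChartHyp γ μ r L H B Hf a₀ Z f) (a h : EuclideanSpace ℝ (Fin n))
    (ha : a ∈ ball a₀ (6 * r)) (hah : a + h ∈ ball a₀ (6 * r)) :
    ‖Z (a + h) - Z a - fderiv ℝ Z a h‖ ≤ H * ‖h‖ ^ γ * ‖h‖ := by
  have := Convex.norm_image_sub_le_of_norm_fderiv_le' (𝕜 := ℝ) (f := Z) (φ := fderiv ℝ Z a)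
    (s := ball a₀ (6 * r) ∩ closedBall a ‖h‖) (C := H * ‖h‖ ^ γ) (x := a) (y := a + h)
    (fun x hx => hc.diff x hx.1) ?_ ((convex_ball _ _).inter (convex_closedBall _ _))
    ⟨ha, by simp⟩ ⟨hah, by simp⟩
  · simpa using this
  · intro x hx
    refine (hc.hold x hx.1 a ha).trans ?_
    have h1 := hc.Hnn
    have h2 := hc.γpos
    have h3 := hx.2
    rw [mem_closedBall, dist_eq_norm] at h3
    gcongr

/-- the regularized kernel times the density -/
noncomputable def G (Z : EuclideanSpace ℝ (Fin n) → F) (f : EuclideanSpace ℝ (Fin n) → ℝ)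
    (v : EuclideanSpace ℝ (Fin n)) (ε : ℝ) (a b : EuclideanSpace ℝ (Fin n)) : ℝ :=
  kreg (n + 1) ε (fderiv ℝ Z a v) (Z a - Z b) * f b

lemma wbound (hc : ChartHyp γ μ r L H B Hf a₀ Z f) (v : EuclideanSpace ℝ (Fin n)) (hv : ‖v‖ ≤ 1)
    (a : EuclideanSpace ℝ (Fin n)) (ha : a ∈ ball a₀ (6 * r)) : ‖fderiv ℝ Z a v‖ ≤ L := by
  refine ((fderiv ℝ Z a).le_opNorm v).trans ?_
  have := hc.bdd a ha
  have := hc.Lnn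
  calc _ ≤ L * 1 := by gcongr
    _ = L := mul_one _

lemma far_bound (hc : ChartHyp γ μ r L H B Hf a₀ Z f) (v : EuclideanSpace ℝ (Fin n))
    (hv : ‖v‖ ≤ 1) (δ : ℝ) (hδ : 0 < δ) : ∃ C, 0 ≤ C ∧ ∀ a ∈ ball a₀ (6 * r), ∀ ε, ∀ b,
      b ∉ ball a δ → |G Z f v ε a b| ≤ (ball a₀ (6 * r)).indicator (fun _ => C) b := by
  have hL := hc.Lnn
  have hB := hc.Bnn
  have hμ := hc.μpos
  refine ⟨|2 - ((n+1:ℕ):ℝ)| * L / (μ⁻¹ * δ) ^ n * B, by positivity, ?_⟩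
  intro a ha ε b hb
  by_cases hbΩ : b ∈ ball a₀ (6 * r)
  · rw [indicator_of_mem hbΩ]
    unfold G
    rw [abs_mul]
    have hw := hc.wbound v hv a ha
    have hbd := hc.fbdd b
    have hk := kreg_bound n ε (fderiv ℝ Z a v) (Z a - Z b) (μ⁻¹ * δ) (by positivity) (by
      refine le_trans ?_ (hc.low a ha b hbΩ)
      rw [mem_ball, dist_comm, dist_eq_norm, not_lt] at hb
      gcongr)
    refine mul_le_mul (hk.trans ?_) hbd (abs_nonneg _) (by positivity)
    gcongr
  · rw [indicator_of_notMem hbΩ]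
    simp [G, hc.fzero' b hbΩ]

lemma near_bound (hc : ChartHyp γ μ r L H B Hf a₀ Z f) (v : EuclideanSpace ℝ (Fin n))
    (hv : ‖v‖ ≤ 1) : ∃ C, 0 ≤ C ∧ ∀ a ∈ ball a₀ (6 * r), ∀ ε, ∀ h, h ≠ 0 →
      h ∈ ball (0 : EuclideanSpace ℝ (Fin n)) r →
      |G Z f v ε a (a + h) + G Z f v ε a (a - h)| ≤ C * ‖h‖ ^ (-((n:ℝ) - γ)) := by
  have hL := hc.Lnn
  have hB := hc.Bnn
  have hμ := hc.μpos
  have hH := hc.Hnn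
  have hHf := hc.Hfnn
  have hr := hc.rpos
  refine ⟨|2 - ((n+1:ℕ):ℝ)| * L * μ ^ n * (Hf * 2 ^ γ) +
    |2 - ((n+1:ℕ):ℝ)| * L * (1 + (n+1:ℕ)) * (2 * H) * μ ^ (n+1) * B, by positivity, ?_⟩
  intro a ha ε h h0 hh
  rw [mem_ball_zero_iff] at hh
  have hpos : 0 < ‖h‖ := norm_pos_iff.2 h0
  by_cases ha4 : a ∈ ball a₀ (4 * r)
  · rw [mem_ball, dist_eq_norm] at ha4
    have hp : a + h ∈ ball a₀ (6 * r) := by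
      rw [mem_ball, dist_eq_norm, add_sub_right_comm]
      exact (norm_add_le _ _).trans_lt (by linarith)
    have hq : a - h ∈ ball a₀ (6 * r) := by
      rw [mem_ball, dist_eq_norm, sub_right_comm]
      exact (norm_sub_le _ _).trans_lt (by linarith)
    have hw := hc.wbound v hv a ha
    set w := fderiv ℝ Z a v
    set t := μ⁻¹ * ‖h‖ with ht
    have htpos : 0 < t := by positivity
    have hu : t ≤ ‖Z a - Z (a + h)‖ := by simpa using hc.low a ha _ hp
    have hv' : t ≤ ‖Z a - Z (a - h)‖ := by simpa using hc.low a ha _ hq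
    have hsum : ‖(Z a - Z (a + h)) - (-(Z a - Z (a - h)))‖ ≤ 2 * H * ‖h‖ ^ γ * ‖h‖ := by
      have h1 := hc.taylor a h ha hp
      have h2 := hc.taylor a (-h) ha (by simpa [sub_eq_add_neg] using hq)
      rw [norm_neg, map_neg, ← sub_eq_add_neg] at h2
      have e : (Z a - Z (a + h)) - (-(Z a - Z (a - h))) =
        -((Z (a + h) - Z a - fderiv ℝ Z a h) + (Z (a - h) - Z a - -(fderiv ℝ Z a h))) := by abel
      rw [e, norm_neg]
      refine (norm_add_le _ _).trans ?_
      linarith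
    have hk1 := kreg_bound n ε w _ t htpos hu
    have hk2 := kreg_diff (n+1) (by omega) ε w (Z a - Z (a + h)) (-(Z a - Z (a - h))) t htpos hu
      (by rwa [norm_neg])
    have hf1 : |f (a + h) - f (a - h)| ≤ Hf * (2 ^ γ * ‖h‖ ^ γ) := by
      refine (hc.fhold _ _).trans ?_
      rw [← Real.mul_rpow (by norm_num) (norm_nonneg _)]
      have : a + h - (a - h) = (2:ℝ) • h := by rw [two_smul]; abel
      rw [this, norm_smul]
      simp
    have hpow : ‖h‖ ^ (-((n:ℝ) - γ)) = ‖h‖ ^ γ / ‖h‖ ^ n := by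
      rw [neg_sub, Real.rpow_sub hpos, Real.rpow_natCast]
    have e : G Z f v ε a (a + h) + G Z f v ε a (a - h) =
        kreg (n+1) ε w (Z a - Z (a + h)) * (f (a + h) - f (a - h)) +
        (kreg (n+1) ε w (Z a - Z (a + h)) - kreg (n+1) ε w (-(Z a - Z (a - h)))) * f (a - h) := by
      unfold G
      rw [kreg_neg]
      ring
    rw [e]
    calc _ ≤ (|2 - ((n+1:ℕ):ℝ)| * L / t ^ n) * (Hf * (2 ^ γ * ‖h‖ ^ γ)) +
          (|2 - ((n+1:ℕ):ℝ)| * L * (1 + (n+1:ℕ)) * (2 * H * ‖h‖ ^ γ * ‖h‖) / t ^ (n+1)) * B := by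
          refine (abs_add_le _ _).trans ?_
          rw [abs_mul, abs_mul]
          refine add_le_add (mul_le_mul (hk1.trans ?_) hf1 (abs_nonneg _) (by positivity))
            (mul_le_mul (hk2.trans ?_) (hc.fbdd _) (abs_nonneg _) (by positivity))
          · gcongr
          · gcongr
      _ = _ := by
          rw [hpow, ht, mul_pow, mul_pow, inv_pow, inv_pow]
          field_simp
          ring
  · have hz : ∀ h' : EuclideanSpace ℝ (Fin n), ‖h'‖ < r → f (a + h') = 0 := by
      intro h' hh'
      apply hc.fzero
      intro hmem
      apply ha4
      rw [mem_ball, dist_eq_norm] at hmem ⊢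
      have : a - a₀ = (a + h' - a₀) - h' := by abel
      rw [this]
      exact (norm_sub_le _ _).trans_lt (by linarith)
    have h1 := hz h hh
    have h2 := hz (-h) (by simpa using hh)
    rw [← sub_eq_add_neg] at h2
    simp only [G, h1, h2, mul_zero, add_zero, abs_zero]
    positivity

lemma Zcont (hc : ChartHyp γ μ r L H B Hf a₀ Z f) : ContinuousOn Z (ball a₀ (6 * r)) :=
  fun a ha => (hc.diff a ha).continuousAt.continuousWithinAt

lemma dZcont (hc : ChartHyp γ μ r L H B Hf a₀ Z f) :
    ContinuousOn (fderiv ℝ Z) (ball a₀ (6 * r)) := by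
  intro a ha
  rw [ContinuousWithinAt, tendsto_iff_norm_sub_tendsto_zero]
  have h0 : Filter.Tendsto (fun b => H * ‖b - a‖ ^ γ) (nhdsWithin a (ball a₀ (6 * r))) (nhds 0) := by
    have : ContinuousAt (fun b => H * ‖b - a‖ ^ γ) a :=
      continuousAt_const.mul (ContinuousAt.rpow_const (by fun_prop) (Or.inr hc.γpos.le))
    have h := this.tendsto
    simp only [sub_self, norm_zero, Real.zero_rpow hc.γpos.ne', mul_zero] at h
    exact h.mono_left nhdsWithin_le_nhds
  refine squeeze_zero' (Filter.Eventually.of_forall fun _ => norm_nonneg _) ?_ h0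
  filter_upwards [self_mem_nhdsWithin] with b hb using hc.hold b hb a ha

lemma Zne (hc : ChartHyp γ μ r L H B Hf a₀ Z f) (a b : EuclideanSpace ℝ (Fin n))
    (ha : a ∈ ball a₀ (6 * r)) (hb : b ∈ ball a₀ (6 * r)) (hab : b ≠ a) : Z a - Z b ≠ 0 := by
  rw [← norm_pos_iff]
  refine lt_of_lt_of_le ?_ (hc.low a ha b hb)
  have := hc.μpos
  have : 0 < ‖a - b‖ := norm_pos_iff.2 (sub_ne_zero.2 hab.symm)
  positivity

lemma G_tendsto (hc : ChartHyp γ μ r L H B Hf a₀ Z f) (v a b : EuclideanSpace ℝ (Fin n))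
    (ha : a ∈ ball a₀ (6 * r)) (hab : b ≠ a) :
    Filter.Tendsto (fun ε => G Z f v ε a b) (nhdsWithin 0 (Ioi 0)) (nhds (G Z f v 0 a b)) := by
  by_cases hb : b ∈ ball a₀ (6 * r)
  · exact (kreg_tendsto _ _ _ (hc.Zne a b ha hb hab)).mul_const _
  · simp [G, hc.fzero' b hb]

lemma kcont (hc : ChartHyp γ μ r L H B Hf a₀ Z f) (v : EuclideanSpace ℝ (Fin n)) (ε : ℝ)
    (hε : ε ≠ 0) :
    ContinuousOn (fun p : EuclideanSpace ℝ (Fin n) × EuclideanSpace ℝ (Fin n) =>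
      kreg (n+1) ε (fderiv ℝ Z p.1 v) (Z p.1 - Z p.2)) (ball a₀ (6 * r) ×ˢ ball a₀ (6 * r)) := by
  have h1 : ContinuousOn (fun p : EuclideanSpace ℝ (Fin n) × EuclideanSpace ℝ (Fin n) =>
      Z p.1 - Z p.2) (ball a₀ (6 * r) ×ˢ ball a₀ (6 * r)) :=
    (hc.Zcont.comp continuousOn_fst fun p hp => hp.1).sub
      (hc.Zcont.comp continuousOn_snd fun p hp => hp.2)
  have h2 : ContinuousOn (fun p : EuclideanSpace ℝ (Fin n) × EuclideanSpace ℝ (Fin n) =>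
      fderiv ℝ Z p.1 v) (ball a₀ (6 * r) ×ˢ ball a₀ (6 * r)) :=
    (hc.dZcont.comp continuousOn_fst fun p hp => hp.1).clm_apply continuousOn_const
  unfold kreg
  refine ContinuousOn.div (continuousOn_const.mul (h1.inner h2))
    (((sreg_continuous ε).comp_continuousOn h1).pow _) ?_
  intro p _
  exact (pow_pos (sreg_pos hε _) _).ne'

lemma mcont (hc : ChartHyp γ μ r L H B Hf a₀ Z f) (ε : ℝ)
    (hε : ε ≠ 0) :
    ContinuousOn (fun p : EuclideanSpace ℝ (Fin n) × EuclideanSpace ℝ (Fin n) =>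
      mreg (n+1) ε (Z p.1 - Z p.2)) (ball a₀ (6 * r) ×ˢ ball a₀ (6 * r)) := by
  have h1 : ContinuousOn (fun p : EuclideanSpace ℝ (Fin n) × EuclideanSpace ℝ (Fin n) =>
      Z p.1 - Z p.2) (ball a₀ (6 * r) ×ˢ ball a₀ (6 * r)) :=
    (hc.Zcont.comp continuousOn_fst fun p hp => hp.1).sub
      (hc.Zcont.comp continuousOn_snd fun p hp => hp.2)
  unfold mreg
  exact ((sreg_continuous ε).comp_continuousOn h1).rpow_const
    fun p _ => Or.inl (sreg_pos hε _).ne'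

lemma G_integrable (hc : ChartHyp γ μ r L H B Hf a₀ Z f) (v a : EuclideanSpace ℝ (Fin n)) (ε : ℝ)
    (hε : ε ≠ 0) (ha : a ∈ ball a₀ (6 * r)) : Integrable (G Z f v ε a) := by
  have h := one_cont (fun b => kreg (n+1) ε (fderiv ℝ Z a v) (Z a - Z b)) (ball a₀ (6 * r))
    isOpen_ball ((hc.kcont v ε hε).comp (f := fun b => (a, b)) (by fun_prop) fun b hb => ⟨ha, hb⟩)
    f hc.fcont hc.fcomp hc.fsupp'
  exact h.1.integrable_of_hasCompactSupport h.2

lemma G0_meas (hc : ChartHyp γ μ r L H B Hf a₀ Z f) (v a : EuclideanSpace ℝ (Fin n))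
    (ha : a ∈ ball a₀ (6 * r)) : AEStronglyMeasurable (G Z f v 0 a) := by
  have hm : MeasurableSet (ball a₀ (6 * r) \ {a}) := measurableSet_ball.diff (measurableSet_singleton a)
  have e : G Z f v 0 a = (ball a₀ (6 * r) \ {a}).indicator (G Z f v 0 a) := by
    ext b
    by_cases hb : b ∈ ball a₀ (6 * r) \ {a}
    · rw [indicator_of_mem hb]
    · rw [indicator_of_notMem hb]
      by_cases hb2 : b ∈ ball a₀ (6 * r)
      · have : b = a := by
          by_contra h
          exact hb ⟨hb2, h⟩
        simp [G, kreg, this]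
      · simp [G, hc.fzero' b hb2]
  rw [e, aestronglyMeasurable_indicator_iff hm]
  refine ContinuousOn.aestronglyMeasurable ?_ hm
  unfold G kreg
  have h1 : ContinuousOn (fun b => Z a - Z b) (ball a₀ (6 * r) \ {a}) :=
    continuousOn_const.sub (hc.Zcont.mono sdiff_subset)
  refine ContinuousOn.mul (ContinuousOn.div (continuousOn_const.mul (h1.inner continuousOn_const))
    (((sreg_continuous 0).comp_continuousOn h1).pow _) ?_) hc.fcont.continuousOn
  intro b hb
  have : sreg 0 (Z a - Z b) ≠ 0 := by
    rw [sreg_zero]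
    exact norm_ne_zero_iff.2 (hc.Zne a b ha hb.1 hb.2)
  exact pow_ne_zero _ this

/-- existence of the principal value -/
lemma pv (hc : ChartHyp γ μ r L H B Hf a₀ Z f) (v : EuclideanSpace ℝ (Fin n)) (hv : ‖v‖ ≤ 1)
    (a : EuclideanSpace ℝ (Fin n)) (ha : a ∈ ball a₀ (6 * r)) :
    Filter.Tendsto (fun ε => ∫ b, (ball a ε)ᶜ.indicator (G Z f v 0 a) b)
      (nhdsWithin 0 (Ioi 0)) (nhds (symInt (G Z f v 0 a) a r)) := by
  obtain ⟨C1, hC1, h1⟩ := hc.far_bound v hv r hc.rpos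
  obtain ⟨C2, hC2, h2⟩ := hc.near_bound v hv
  refine symInt_tendsto (by have := hc.hn; omega) _ _ _ a r hc.rpos (ball a₀ (6 * r))
    measurableSet_ball measure_ball_lt_top.ne (C1 + C2) ((n:ℝ) - γ) (by linarith [hc.γpos])
    ?_ ?_ ?_ ?_
  · filter_upwards [self_mem_nhdsWithin] with ε hε
    obtain ⟨C3, hC3, h3⟩ := hc.far_bound v hv ε hε
    refine Integrable.mono' (g := (ball a₀ (6 * r)).indicator (fun _ => C3)) ?_
      ((hc.G0_meas v a ha).indicator measurableSet_ball.compl) ?_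
    · rw [integrable_indicator_iff measurableSet_ball]
      exact integrableOn_const measure_ball_lt_top.ne
    · refine Filter.Eventually.of_forall fun b => ?_
      by_cases hb : b ∈ ball a ε
      · rw [indicator_of_notMem (by simpa using hb), norm_zero]
        exact indicator_nonneg (fun _ _ => hC3) _
      · rw [indicator_of_mem (by simpa using hb)]
        exact h3 a ha 0 b hb
  · refine Filter.Eventually.of_forall fun ε b hb => ?_
    have hle : |(ball a ε)ᶜ.indicator (G Z f v 0 a) b| ≤ |G Z f v 0 a b| := by
      rw [← Real.norm_eq_abs, ← Real.norm_eq_abs]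
      exact norm_indicator_le_norm_self _ _
    refine hle.trans ((h1 a ha 0 b hb).trans ?_)
    exact indicator_le_indicator (by linarith)
  · refine Filter.Eventually.of_forall fun ε h h0 hh => ?_
    have hb := (h2 a ha 0 h h0 hh)
    have hle : C2 * ‖h‖ ^ (-((n:ℝ) - γ)) ≤ (C1 + C2) * ‖h‖ ^ (-((n:ℝ) - γ)) := by
      gcongr; linarith
    by_cases hhε : ‖h‖ < ε
    · simp only [indicator, mem_compl_iff, mem_ball, dist_self_add_left, dist_self_sub_left, hhε]
      simp
      positivity
    · simp only [indicator, mem_compl_iff, mem_ball, dist_self_add_left, dist_self_sub_left, hhε]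
      simpa using hb.trans hle
  · intro b hb
    refine tendsto_const_nhds.congr' ?_
    have : 0 < dist b a := dist_pos.2 hb
    filter_upwards [Ioo_mem_nhdsGT this] with ε hε
    rw [indicator_of_mem]
    simpa using hε.2.le

lemma reg_tendsto (hc : ChartHyp γ μ r L H B Hf a₀ Z f) (v : EuclideanSpace ℝ (Fin n))
    (hv : ‖v‖ ≤ 1) :
    (∀ a ∈ ball a₀ (6 * r), Filter.Tendsto (fun ε => ∫ b, G Z f v ε a b)
      (nhdsWithin 0 (Ioi 0)) (nhds (symInt (G Z f v 0 a) a r))) ∧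
    ∃ C, ∀ a ∈ ball a₀ (6 * r), ∀ ε, ε ≠ 0 → |∫ b, G Z f v ε a b| ≤ C := by
  obtain ⟨C1, hC1, h1⟩ := hc.far_bound v hv r hc.rpos
  obtain ⟨C2, hC2, h2⟩ := hc.near_bound v hv
  have h1' : ∀ a ∈ ball a₀ (6 * r), ∀ ε, ∀ b, b ∉ ball a r →
      |G Z f v ε a b| ≤ (ball a₀ (6 * r)).indicator (fun _ => C1 + C2) b := fun a ha ε b hb =>
    (h1 a ha ε b hb).trans (indicator_le_indicator (by linarith))
  have h2' : ∀ a ∈ ball a₀ (6 * r), ∀ ε, ∀ h, h ≠ 0 →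
      h ∈ ball (0 : EuclideanSpace ℝ (Fin n)) r →
      |G Z f v ε a (a + h) + G Z f v ε a (a - h)| ≤ (C1 + C2) * ‖h‖ ^ (-((n:ℝ) - γ)) :=
    fun a ha ε h h0 hh => (h2 a ha ε h h0 hh).trans (by gcongr; linarith)
  have hn : 1 ≤ n := by have := hc.hn; omega
  have hα : (n:ℝ) - γ < n := by linarith [hc.γpos]
  constructor
  · intro a ha
    refine symInt_tendsto hn _ _ _ a r hc.rpos (ball a₀ (6 * r))
      measurableSet_ball measure_ball_lt_top.ne (C1 + C2) ((n:ℝ) - γ) hα ?_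
      (Filter.Eventually.of_forall (h1' a ha)) (Filter.Eventually.of_forall (h2' a ha))
      fun b hb => hc.G_tendsto v a b ha hb
    filter_upwards [self_mem_nhdsWithin] with ε hε
    exact hc.G_integrable v a ε (ne_of_gt hε) ha
  · refine ⟨(∫ b, (ball a₀ (6 * r)).indicator (fun _ => |C1 + C2|) b)
      + (1/2) * ∫ h in ball (0 : EuclideanSpace ℝ (Fin n)) r, |C1 + C2| * ‖h‖ ^ (-((n:ℝ) - γ)),
      fun a ha ε hε => ?_⟩
    rw [symInt_eq _ a r (hc.G_integrable v a ε hε ha)]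
    exact symInt_bound hn _ a r (ball a₀ (6 * r)) measurableSet_ball measure_ball_lt_top.ne
      (C1 + C2) ((n:ℝ) - γ) hα (h1' a ha ε) (h2' a ha ε)

lemma single_tendsto (hc : ChartHyp γ μ r L H B Hf a₀ Z f) :
    (∀ a ∈ ball a₀ (6 * r), Filter.Tendsto (fun ε => ∫ b, mreg (n+1) ε (Z a - Z b) * f b)
      (nhdsWithin 0 (Ioi 0)) (nhds (∫ b, mreg (n+1) 0 (Z a - Z b) * f b))) ∧
    ∃ C, ∀ a ∈ ball a₀ (6 * r), ∀ ε, ε ≠ 0 → |∫ b, mreg (n+1) ε (Z a - Z b) * f b| ≤ C := by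
  have hn : 1 ≤ n := by have := hc.hn; omega
  have : Nonempty (Fin n) := ⟨⟨0, by omega⟩⟩
  have hB := hc.Bnn
  have hμ := hc.μpos
  set φ : EuclideanSpace ℝ (Fin n) → ℝ := (ball 0 (12 * r)).indicator
    (fun h => (μ⁻¹ ^ (2 - ((n+1:ℕ):ℝ)) * B) * ‖h‖ ^ (-((n:ℝ) - 1))) with hφ
  have hφi : Integrable φ := by
    rw [hφ, integrable_indicator_iff measurableSet_ball]
    exact (integrableOn_pow hn (by linarith)).const_mul _
  have hbd : ∀ a ∈ ball a₀ (6 * r), ∀ ε b, b ≠ a → |mreg (n+1) ε (Z a - Z b) * f b| ≤ φ (a - b) := by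
    intro a ha ε b hab
    by_cases hb : b ∈ ball a₀ (6 * r)
    · have hmem : a - b ∈ ball (0 : EuclideanSpace ℝ (Fin n)) (12 * r) := by
        rw [mem_ball_zero_iff, ← dist_eq_norm]
        rw [mem_ball] at ha hb
        linarith [dist_triangle_right a b a₀]
      have hpos : 0 < ‖a - b‖ := norm_pos_iff.2 (sub_ne_zero.2 hab.symm)
      rw [hφ, indicator_of_mem hmem, abs_mul]
      have h1 := mreg_bound (n+1) (by omega) ε (Z a - Z b) (μ⁻¹ * ‖a - b‖) (by positivity)
        (hc.low a ha b hb)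
      rw [Real.mul_rpow (by positivity) (by positivity)] at h1
      have h2 : (-((n:ℝ) - 1)) = 2 - ((n+1:ℕ):ℝ) := by push_cast; ring
      rw [h2, mul_right_comm]
      exact mul_le_mul h1 (hc.fbdd b) (abs_nonneg _) (by positivity)
    · rw [hc.fzero' b hb, mul_zero, abs_zero]
      exact indicator_nonneg (fun _ _ => by positivity) _
  have hInteg : ∀ a ∈ ball a₀ (6 * r), ∀ ε, ε ≠ 0 →
      Integrable (fun b => mreg (n+1) ε (Z a - Z b) * f b) := by
    intro a ha ε hε
    have h := one_cont (fun b => mreg (n+1) ε (Z a - Z b)) (ball a₀ (6 * r))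
      isOpen_ball ((hc.mcont ε hε).comp (f := fun b => (a, b)) (by fun_prop) fun b hb => ⟨ha, hb⟩)
      f hc.fcont hc.fcomp hc.fsupp'
    exact h.1.integrable_of_hasCompactSupport h.2
  constructor
  · intro a ha
    refine tendsto_integral_filter_of_dominated_convergence (fun b => φ (a - b)) ?_ ?_
      (hφi.comp_sub_left a) ?_
    · filter_upwards [self_mem_nhdsWithin] with ε hε using (hInteg a ha ε (ne_of_gt hε)).1
    · refine Filter.Eventually.of_forall fun ε => ?_
      filter_upwards [Measure.ae_ne volume a] with b hb using hbd a ha ε b hb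
    · filter_upwards [Measure.ae_ne volume a] with b hb
      by_cases hbΩ : b ∈ ball a₀ (6 * r)
      · exact (mreg_tendsto _ _ (hc.Zne a b ha hbΩ hb)).mul_const _
      · simp [hc.fzero' b hbΩ]
  · refine ⟨∫ h, φ h, fun a ha ε hε => ?_⟩
    rw [← integral_sub_left_eq_self φ volume a, ← Real.norm_eq_abs]
    refine norm_integral_le_of_norm_le (hφi.comp_sub_left a) ?_
    filter_upwards [Measure.ae_ne volume a] with b hb using hbd a ha ε b hb

lemma weak_reg (hc : ChartHyp γ μ r L H B Hf a₀ Z f) (v : EuclideanSpace ℝ (Fin n))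
    (g : EuclideanSpace ℝ (Fin n) → ℝ) (hg : ContDiff ℝ (⊤ : ℕ∞) g)
    (hgc : HasCompactSupport g) (hgs : tsupport g ⊆ ball a₀ (6 * r)) (ε : ℝ) (hε : ε ≠ 0) :
    AEStronglyMeasurable (fun a => (∫ b, mreg (n+1) ε (Z a - Z b) * f b) * fderiv ℝ g a v) ∧
    AEStronglyMeasurable (fun a => (∫ b, G Z f v ε a b) * g a) ∧
    -(∫ a, (∫ b, mreg (n+1) ε (Z a - Z b) * f b) * fderiv ℝ g a v)
      = ∫ a, (∫ b, G Z f v ε a b) * g a := by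
  have hg'cont : Continuous (fun a => fderiv ℝ g a v) :=
    (hg.continuous_fderiv (by simp)).clm_apply continuous_const
  have hg'c : HasCompactSupport (fun a => fderiv ℝ g a v) := hgc.fderiv_apply ℝ v
  have hg's : tsupport (fun a => fderiv ℝ g a v) ⊆ ball a₀ (6 * r) :=
    (tsupport_fderiv_apply_subset ℝ v).trans hgs
  have p1 := prod_cont _ _ _ isOpen_ball isOpen_ball (hc.mcont ε hε) _ f hg'cont hc.fcont hg'c
    hc.fcomp hg's hc.fsupp'
  have p2 := prod_cont _ _ _ isOpen_ball isOpen_ball (hc.kcont v ε hε) g f hg.continuous hc.fcont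
    hgc hc.fcomp hgs hc.fsupp'
  dsimp only at p1 p2
  have m1 := (p1.1.integrable_of_hasCompactSupport p1.2
    (μ := (volume : Measure (EuclideanSpace ℝ (Fin n))).prod volume)).integral_prod_left.1
  have m2 := (p2.1.integrable_of_hasCompactSupport p2.2
    (μ := (volume : Measure (EuclideanSpace ℝ (Fin n))).prod volume)).integral_prod_left.1
  simp only [Function.uncurry, integral_mul_const] at m1 m2
  refine ⟨m1, m2, ?_⟩
  have s1 := integral_integral_swap_of_hasCompactSupport p1.1 p1.2
    (μ := (volume : Measure (EuclideanSpace ℝ (Fin n)))) (ν := volume)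
  have s2 := integral_integral_swap_of_hasCompactSupport p2.1 p2.2
    (μ := (volume : Measure (EuclideanSpace ℝ (Fin n)))) (ν := volume)
  simp only [integral_mul_const] at s1 s2
  unfold G
  rw [s1, s2, ← integral_neg]
  congr 1
  ext b
  by_cases hb : b ∈ ball a₀ (6 * r)
  · have c1 := (hc.mcont ε hε).comp (f := fun a => (a, b)) (s := ball a₀ (6 * r)) (by fun_prop)
      fun a ha => ⟨ha, hb⟩
    have c2 := (hc.kcont v ε hε).comp (f := fun a => (a, b)) (s := ball a₀ (6 * r)) (by fun_prop)
      fun a ha => ⟨ha, hb⟩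
    have i1 := one_cont _ _ isOpen_ball c1 _ hg'cont hg'c hg's
    have i2 := one_cont _ _ isOpen_ball c2 _ hg.continuous hgc hgs
    have i3 := one_cont _ _ isOpen_ball c1 _ hg.continuous hgc hgs
    have := integral_bilinear_hasLineDerivAt_right_eq_neg_left_of_integrable
      (μ := (volume : Measure (EuclideanSpace ℝ (Fin n))))
      (B := ContinuousLinearMap.mul ℝ ℝ) (f := fun a => mreg (n+1) ε (Z a - Z b))
      (f' := fun a => kreg (n+1) ε (fderiv ℝ Z a v) (Z a - Z b)) (g := g)
      (g' := fun a => fderiv ℝ g a v) (v := v)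
      (i2.1.integrable_of_hasCompactSupport i2.2) (i1.1.integrable_of_hasCompactSupport i1.2)
      (i3.1.integrable_of_hasCompactSupport i3.2)
      (fun a ha => mreg_deriv (n+1) ε hε Z a v (Z b) (hc.diff a (hgs ha)))
      (fun a _ => ((hg.differentiable (by simp)) a).hasFDerivAt.hasLineDerivAt v)
    simp only [ContinuousLinearMap.mul_apply'] at this
    simp only [mul_right_comm _ (f b), integral_mul_const]
    rw [this]
    ring
  · simp [hc.fzero' b hb]

lemma weak (hc : ChartHyp γ μ r L H B Hf a₀ Z f) (v : EuclideanSpace ℝ (Fin n)) (hv : ‖v‖ ≤ 1)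
    (g : EuclideanSpace ℝ (Fin n) → ℝ) (hg : ContDiff ℝ (⊤ : ℕ∞) g)
    (hgc : HasCompactSupport g) (hgs : tsupport g ⊆ ball a₀ (6 * r)) :
    -(∫ a, (∫ b, mreg (n+1) 0 (Z a - Z b) * f b) * fderiv ℝ g a v)
      = ∫ a, symInt (G Z f v 0 a) a r * g a := by
  have hg'cont : Continuous (fun a => fderiv ℝ g a v) :=
    (hg.continuous_fderiv (by simp)).clm_apply continuous_const
  have hg'c : HasCompactSupport (fun a => fderiv ℝ g a v) := hgc.fderiv_apply ℝ v
  have hg's : tsupport (fun a => fderiv ℝ g a v) ⊆ ball a₀ (6 * r) :=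
    (tsupport_fderiv_apply_subset ℝ v).trans hgs
  obtain ⟨t1, C1, b1⟩ := hc.single_tendsto
  obtain ⟨t2, C2, b2⟩ := hc.reg_tendsto v hv
  have z1 : ∀ a, a ∉ ball a₀ (6 * r) → fderiv ℝ g a v = 0 := fun a ha =>
    image_eq_zero_of_notMem_tsupport (f := fun a => fderiv ℝ g a v) fun h => ha (hg's h)
  have z2 : ∀ a, a ∉ ball a₀ (6 * r) → g a = 0 := fun a ha =>
    image_eq_zero_of_notMem_tsupport fun h => ha (hgs h)
  have T1 : Filter.Tendsto
      (fun ε => ∫ a, (∫ b, mreg (n+1) ε (Z a - Z b) * f b) * fderiv ℝ g a v)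
      (nhdsWithin 0 (Ioi 0))
      (nhds (∫ a, (∫ b, mreg (n+1) 0 (Z a - Z b) * f b) * fderiv ℝ g a v)) := by
    refine tendsto_integral_filter_of_dominated_convergence (fun a => C1 * ‖fderiv ℝ g a v‖) ?_ ?_
      ((hg'cont.integrable_of_hasCompactSupport hg'c).norm.const_mul _) ?_
    · filter_upwards [self_mem_nhdsWithin] with ε hε
      exact (hc.weak_reg v g hg hgc hgs ε (ne_of_gt hε)).1
    · filter_upwards [self_mem_nhdsWithin] with ε hε
      refine Filter.Eventually.of_forall fun a => ?_
      by_cases ha : a ∈ ball a₀ (6 * r)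
      · rw [norm_mul]
        gcongr
        exact b1 a ha ε (ne_of_gt hε)
      · simp [z1 a ha]
    · refine Filter.Eventually.of_forall fun a => ?_
      by_cases ha : a ∈ ball a₀ (6 * r)
      · exact (t1 a ha).mul_const _
      · simp [z1 a ha]
  have T2 : Filter.Tendsto
      (fun ε => ∫ a, (∫ b, G Z f v ε a b) * g a)
      (nhdsWithin 0 (Ioi 0))
      (nhds (∫ a, symInt (G Z f v 0 a) a r * g a)) := by
    refine tendsto_integral_filter_of_dominated_convergence (fun a => C2 * ‖g a‖) ?_ ?_
      ((hg.continuous.integrable_of_hasCompactSupport hgc).norm.const_mul _) ?_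
    · filter_upwards [self_mem_nhdsWithin] with ε hε
      exact (hc.weak_reg v g hg hgc hgs ε (ne_of_gt hε)).2.1
    · filter_upwards [self_mem_nhdsWithin] with ε hε
      refine Filter.Eventually.of_forall fun a => ?_
      by_cases ha : a ∈ ball a₀ (6 * r)
      · rw [norm_mul]
        gcongr
        exact b2 a ha ε (ne_of_gt hε)
      · simp [z2 a ha]
    · refine Filter.Eventually.of_forall fun a => ?_
      by_cases ha : a ∈ ball a₀ (6 * r)
      · exact (t2 a ha).mul_const _
      · simp [z2 a ha]
  refine tendsto_nhds_unique (T1.neg.congr' ?_) T2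
  filter_upwards [self_mem_nhdsWithin] with ε hε
  exact (hc.weak_reg v g hg hgc hgs ε (ne_of_gt hε)).2.2

end ChartHyp
end Chart

theorem pv_core (n : ℕ) (hn : 2 ≤ n) (γ : ℝ) (hγ : γ ∈ Set.Ioo (0:ℝ) 1)
    (μ : ℝ) (hμ : 1 ≤ μ) (r₀ : ℝ) (hr₀ : 0 < r₀)
    (a₀ : EuclideanSpace ℝ (Fin n))
    (Z : EuclideanSpace ℝ (Fin n) → EuclideanSpace ℝ (Fin (n+1)))
    (hZdiff : ∀ a ∈ Metric.ball a₀ (6 * r₀), DifferentiableAt ℝ Z a)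
    (hZlow : ∀ a ∈ Metric.ball a₀ (6 * r₀), ∀ b ∈ Metric.ball a₀ (6 * r₀),
      μ⁻¹ * ‖a - b‖ ≤ ‖Z a - Z b‖)
    (H : ℝ)
    (hZhold : ∀ a ∈ Metric.ball a₀ (6 * r₀), ∀ b ∈ Metric.ball a₀ (6 * r₀),
      ‖fderiv ℝ Z a - fderiv ℝ Z b‖ ≤ H * ‖a - b‖ ^ γ)
    (f : EuclideanSpace ℝ (Fin n) → ℝ) (Hf : ℝ)
    (hf : ∀ a b, |f a - f b| ≤ Hf * ‖a - b‖ ^ γ)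
    (hfsupp : tsupport f ⊆ Metric.ball a₀ (3 * r₀))
    (j : Fin n) :
    ∃ P : EuclideanSpace ℝ (Fin n) → ℝ,
      (∀ a ∈ Metric.ball a₀ (6 * r₀),
        Filter.Tendsto
          (fun ε : ℝ =>
            ∫ b in Metric.ball a₀ (6 * r₀) \ Metric.ball a ε,
              ((2 - ((n+1:ℕ):ℝ)) * ⟪Z a - Z b, fderiv ℝ Z a (EuclideanSpace.single j 1)⟫
                  / ‖Z a - Z b‖ ^ (n+1)) * f b)
          (nhdsWithin 0 (Set.Ioi 0)) (nhds (P a))) ∧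
      (∀ g : EuclideanSpace ℝ (Fin n) → ℝ,
        ContDiff ℝ (⊤ : ℕ∞) g → tsupport g ⊆ Metric.ball a₀ (6 * r₀) →
        -(∫ a, (∫ b in Metric.ball a₀ (6 * r₀), ‖Z a - Z b‖ ^ (2 - ((n+1:ℕ):ℝ)) * f b)
              * fderiv ℝ g a (EuclideanSpace.single j 1))
          = ∫ a, P a * g a) := by
  have hcomp : ∀ (R : ℝ) (g : EuclideanSpace ℝ (Fin n) → ℝ), tsupport g ⊆ ball a₀ R →
      HasCompactSupport g := fun R g hg =>
    Metric.isCompact_of_isClosed_isBounded (isClosed_tsupport g) (isBounded_ball.subset hg)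
  have hfcont : Continuous f := by
    rw [continuous_iff_continuousAt]
    intro a
    rw [ContinuousAt, tendsto_iff_norm_sub_tendsto_zero]
    have h0 : Filter.Tendsto (fun b => Hf * ‖b - a‖ ^ γ) (nhds a) (nhds 0) := by
      have : ContinuousAt (fun b => Hf * ‖b - a‖ ^ γ) a :=
        continuousAt_const.mul (ContinuousAt.rpow_const (by fun_prop) (Or.inr hγ.1.le))
      have h := this.tendsto
      simpa only [sub_self, norm_zero, Real.zero_rpow hγ.1.ne', mul_zero] using h
    exact squeeze_zero (fun _ => norm_nonneg _) (fun b => hf b a) h0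
  obtain ⟨B, hB⟩ := (hcomp _ f hfsupp).exists_bound_of_continuous hfcont
  have hγ0 := hγ.1
  have hc : ChartHyp γ μ r₀ (‖fderiv ℝ Z a₀‖ + |H| * (6 * r₀) ^ γ) |H| B |Hf| a₀ Z f :=
    { hn := hn
      γpos := hγ.1
      μpos := by linarith
      rpos := hr₀
      Hnn := abs_nonneg _
      Hfnn := abs_nonneg _
      diff := hZdiff
      low := hZlow
      hold := fun a ha b hb => (hZhold a ha b hb).trans (by gcongr; exact le_abs_self _)
      bdd := by
        intro a ha
        have h0 : a₀ ∈ ball a₀ (6 * r₀) := mem_ball_self (by linarith)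
        have h1 : ‖fderiv ℝ Z a - fderiv ℝ Z a₀‖ ≤ |H| * (6 * r₀) ^ γ := by
          refine (hZhold a ha a₀ h0).trans ?_
          rw [mem_ball, dist_eq_norm] at ha
          gcongr
          exact le_abs_self _
        calc ‖fderiv ℝ Z a‖ = ‖fderiv ℝ Z a₀ + (fderiv ℝ Z a - fderiv ℝ Z a₀)‖ := by simp
          _ ≤ _ := (norm_add_le _ _).trans (by gcongr)
      fhold := fun a b => (hf a b).trans (by gcongr; exact le_abs_self _)
      fcont := hfcont
      fcomp := hcomp _ f hfsupp
      fsupp := hfsupp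
      fbdd := hB }
  have hv : ‖(EuclideanSpace.single j (1:ℝ) : EuclideanSpace ℝ (Fin n))‖ ≤ 1 := by simp
  refine ⟨fun a => symInt (ChartHyp.G Z f (EuclideanSpace.single j 1) 0 a) a r₀, ?_, ?_⟩
  · intro a ha
    refine (hc.pv _ hv a ha).congr fun ε => ?_
    rw [← integral_indicator (measurableSet_ball.diff measurableSet_ball)]
    congr 1
    ext b
    by_cases hb : b ∈ ball a₀ (6 * r₀)
    · simp [indicator, hb, ChartHyp.G, kreg, sreg_zero]
    · simp [indicator, hb, ChartHyp.G, hc.fzero' b hb]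
  · intro g hg hgs
    rw [← hc.weak _ hv g hg (hcomp _ g hgs) hgs]
    congr 2
    ext a
    congr 1
    rw [setIntegral_eq_integral_of_forall_compl_eq_zero]
    · simp [mreg, sreg_zero]
    · intro b hb
      simp [hc.fzero' b hb]

/-- Principal-value formula for the derivative of the single-layer-type operator
in a chart. -/
theorem pv_formula_chart
    (d : ℕ) (hd : 3 ≤ d) (γ : ℝ) (hγ : γ ∈ Set.Ioo (0:ℝ) 1)
    (μ : ℝ) (hμ : 1 ≤ μ) (r₀ : ℝ) (hr₀ : 0 < r₀)
    (a₀ : EuclideanSpace ℝ (Fin (d - 1)))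
    (Z : EuclideanSpace ℝ (Fin (d - 1)) → EuclideanSpace ℝ (Fin d))
    (hZdiff : ∀ a ∈ Metric.ball a₀ (6 * r₀), DifferentiableAt ℝ Z a)
    (hZlow : ∀ a ∈ Metric.ball a₀ (6 * r₀), ∀ b ∈ Metric.ball a₀ (6 * r₀),
      μ⁻¹ * ‖a - b‖ ≤ ‖Z a - Z b‖)
    (H : ℝ)
    (hZhold : ∀ a ∈ Metric.ball a₀ (6 * r₀), ∀ b ∈ Metric.ball a₀ (6 * r₀),
      ‖fderiv ℝ Z a - fderiv ℝ Z b‖ ≤ H * ‖a - b‖ ^ γ)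
    (f : EuclideanSpace ℝ (Fin (d - 1)) → ℝ) (Hf : ℝ)
    (hf : ∀ a b, |f a - f b| ≤ Hf * ‖a - b‖ ^ γ)
    (hfsupp : tsupport f ⊆ Metric.ball a₀ (3 * r₀))
    (j : Fin (d - 1)) :
    ∃ P : EuclideanSpace ℝ (Fin (d - 1)) → ℝ,
      (∀ a ∈ Metric.ball a₀ (6 * r₀),
        Filter.Tendsto
          (fun ε : ℝ =>
            ∫ b in Metric.ball a₀ (6 * r₀) \ Metric.ball a ε,
              ((2 - (d:ℝ)) * ⟪Z a - Z b, fderiv ℝ Z a (EuclideanSpace.single j 1)⟫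
                  / ‖Z a - Z b‖ ^ d) * f b)
          (nhdsWithin 0 (Set.Ioi 0)) (nhds (P a))) ∧
      (∀ g : EuclideanSpace ℝ (Fin (d - 1)) → ℝ,
        ContDiff ℝ (⊤ : ℕ∞) g → tsupport g ⊆ Metric.ball a₀ (6 * r₀) →
        -(∫ a, (∫ b in Metric.ball a₀ (6 * r₀), ‖Z a - Z b‖ ^ (2 - (d:ℝ)) * f b)
              * fderiv ℝ g a (EuclideanSpace.single j 1))
          = ∫ a, P a * g a) := by
  obtain ⟨n, rfl⟩ : ∃ n, d = n + 1 := ⟨d - 1, by omega⟩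
  exact pv_core n (by omega) γ hγ μ hμ r₀ hr₀ a₀ Z hZdiff hZlow H hZhold f Hf hf hfsupp j
end

section
/- Pseudo-oddness cancellation estimate: let d ≥ 2, γ ∈ (0,1), μ ≥ 1, L > 0, H > 0, r₀ > 0, a₀ ∈ ℝ^{d-1}, and let Z : B(a₀, 6r₀) ⊂ ℝ^{d-1} → ℝ^d be continuously differentiable with (1/μ)|a-b| ≤ |Z(a)-Z(b)| ≤ L|a-b| for all a,b, and with ‖DZ‖_γ ≤ H (γ-Hölder seminorm of the derivative). Then there is a constant C, depending only on d, γ, μ, L, H and r₀, such that for every a ∈ B(a₀, 3r₀) and every ε ∈ (0, 3r₀), | ∫_{{ξ ∈ ℝ^{d-1} : ε < |ξ| < 3r₀}} (Z(a+ξ) - Z(a)) / |Z(a+ξ) - Z(a)|^d dξ | ≤ C. -/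
open MeasureTheory Metric Set

/-- Lipschitz-type estimate for the kernel `v / |v|^d` away from the origin. -/
theorem kernel_diff_bound {F : Type*} [NormedAddCommGroup F] [NormedSpace ℝ F]
    (d : ℕ) (hd : 2 ≤ d) (μ L t : ℝ) (hμ : 1 ≤ μ) (hL : 0 < L) (ht : 0 < t) (u v : F)
    (hu1 : μ⁻¹ * t ≤ ‖u‖) (hu2 : ‖u‖ ≤ L * t) (hv1 : μ⁻¹ * t ≤ ‖v‖) (hv2 : ‖v‖ ≤ L * t) :
    ‖(‖u‖ ^ d)⁻¹ • u - (‖v‖ ^ d)⁻¹ • v‖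
      ≤ (μ ^ d + d * L ^ d * μ ^ (2 * d)) * (t ^ d)⁻¹ * ‖u - v‖ := by
  have hμ0 : 0 < μ := by linarith
  have hm : 0 < μ⁻¹ * t := by positivity
  have hu0 : 0 < ‖u‖ := hm.trans_le hu1
  have hv0 : 0 < ‖v‖ := hm.trans_le hv1
  have iu : (‖u‖ ^ d)⁻¹ ≤ μ ^ d * (t ^ d)⁻¹ := by
    calc (‖u‖ ^ d)⁻¹ ≤ ((μ⁻¹ * t) ^ d)⁻¹ := by gcongr
      _ = μ ^ d * (t ^ d)⁻¹ := by rw [mul_pow, mul_inv, inv_pow, inv_inv]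
  have iv : (‖v‖ ^ d)⁻¹ ≤ μ ^ d * (t ^ d)⁻¹ := by
    calc (‖v‖ ^ d)⁻¹ ≤ ((μ⁻¹ * t) ^ d)⁻¹ := by gcongr
      _ = μ ^ d * (t ^ d)⁻¹ := by rw [mul_pow, mul_inv, inv_pow, inv_inv]
  have e : (‖u‖ ^ d)⁻¹ • u - (‖v‖ ^ d)⁻¹ • v
      = (‖u‖ ^ d)⁻¹ • (u - v) + ((‖u‖ ^ d)⁻¹ - (‖v‖ ^ d)⁻¹) • v := by
    rw [smul_sub, sub_smul]; abel
  have hpow : |‖v‖ ^ d - ‖u‖ ^ d| ≤ ‖u - v‖ * d * (L * t) ^ (d - 1) := by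
    refine (abs_pow_sub_pow_le _ _ _).trans ?_
    rw [abs_of_pos hu0, abs_of_pos hv0]
    have h1 : |‖v‖ - ‖u‖| ≤ ‖u - v‖ := by
      rw [norm_sub_rev]; exact abs_norm_sub_norm_le v u
    have h2 : max ‖v‖ ‖u‖ ≤ L * t := max_le hv2 hu2
    have h3 : 0 ≤ max ‖v‖ ‖u‖ := le_max_of_le_left hv0.le
    gcongr
  have e2 : (‖u‖ ^ d)⁻¹ - (‖v‖ ^ d)⁻¹ = (‖v‖ ^ d - ‖u‖ ^ d) * ((‖u‖ ^ d)⁻¹ * (‖v‖ ^ d)⁻¹) := by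
    field_simp
  have h2 : ‖((‖u‖ ^ d)⁻¹ - (‖v‖ ^ d)⁻¹) • v‖
      ≤ (d * L ^ d * μ ^ (2 * d)) * (t ^ d)⁻¹ * ‖u - v‖ := by
    rw [norm_smul, e2, Real.norm_eq_abs, abs_mul,
      abs_of_pos (by positivity : 0 < (‖u‖ ^ d)⁻¹ * (‖v‖ ^ d)⁻¹)]
    calc |‖v‖ ^ d - ‖u‖ ^ d| * ((‖u‖ ^ d)⁻¹ * (‖v‖ ^ d)⁻¹) * ‖v‖
        ≤ (‖u - v‖ * d * (L * t) ^ (d - 1)) *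
          ((μ ^ d * (t ^ d)⁻¹) * (μ ^ d * (t ^ d)⁻¹)) * (L * t) := by gcongr
      _ = ‖u - v‖ * d * ((L * t) ^ (d - 1) * (L * t)) *
          ((μ ^ d * (t ^ d)⁻¹) * (μ ^ d * (t ^ d)⁻¹)) := by ring
      _ = _ := by
        rw [← pow_succ, Nat.sub_add_cancel (by omega), mul_pow, two_mul, pow_add]
        field_simp
  rw [e]
  refine (norm_add_le _ _).trans ?_
  have h1 : ‖(‖u‖ ^ d)⁻¹ • (u - v)‖ ≤ μ ^ d * (t ^ d)⁻¹ * ‖u - v‖ := by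
    rw [norm_smul, Real.norm_eq_abs, abs_of_pos (by positivity)]
    gcongr
  linarith

/-- Second symmetric difference bound from Hölder continuity of the derivative. -/
theorem second_diff_bound {E F : Type*} [NormedAddCommGroup E] [NormedSpace ℝ E]
    [NormedAddCommGroup F] [NormedSpace ℝ F] (γ H R : ℝ) (hγ : 0 < γ) (hH : 0 < H)
    (a₀ a ξ : E) (Z : E → F)
    (hZ : ∀ a ∈ ball a₀ (2 * R), DifferentiableAt ℝ Z a)
    (hD : ∀ a ∈ ball a₀ (2 * R), ∀ b ∈ ball a₀ (2 * R),
        ‖fderiv ℝ Z a - fderiv ℝ Z b‖ ≤ H * ‖a - b‖ ^ γ)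
    (ha : a ∈ ball a₀ R) (hξ : ‖ξ‖ < R) :
    ‖(Z (a + ξ) - Z a) - (Z a - Z (a - ξ))‖ ≤ 2 * H * ‖ξ‖ ^ γ * ‖ξ‖ := by
  have hsub : ∀ x ∈ closedBall a ‖ξ‖, x ∈ ball a₀ (2 * R) := by
    intro x hx
    rw [mem_closedBall] at hx
    rw [mem_ball] at ha ⊢
    linarith [dist_triangle x a a₀]
  have haa : a ∈ closedBall a ‖ξ‖ := mem_closedBall_self (norm_nonneg _)
  have key : ∀ y ∈ closedBall a ‖ξ‖,
      ‖Z y - Z a - (fderiv ℝ Z a) (y - a)‖ ≤ (H * ‖ξ‖ ^ γ) * ‖y - a‖ := by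
    intro y hy
    refine (convex_closedBall a ‖ξ‖).norm_image_sub_le_of_norm_hasFDerivWithin_le'
      (f' := fderiv ℝ Z)
      (fun x hx => (hZ x (hsub x hx)).hasFDerivAt.hasFDerivWithinAt) ?_ haa hy
    intro x hx
    refine (hD x (hsub x hx) a (hsub a haa)).trans ?_
    rw [mem_closedBall, dist_eq_norm] at hx
    gcongr
  have k1 := key (a + ξ) (by simp [dist_eq_norm])
  have k2 := key (a - ξ) (by simp [dist_eq_norm])
  have e1 : a + ξ - a = ξ := by abel
  have e2 : a - ξ - a = -ξ := by abel
  rw [e1] at k1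
  rw [e2, norm_neg, map_neg] at k2
  have e : (Z (a + ξ) - Z a) - (Z a - Z (a - ξ)) =
      (Z (a + ξ) - Z a - (fderiv ℝ Z a) ξ) + (Z (a - ξ) - Z a - -(fderiv ℝ Z a) ξ) := by abel
  rw [e]
  refine (norm_add_le _ _).trans ?_
  linarith


/-- Pseudo-oddness cancellation estimate for truncated integrals of the kernel
`(Z(a+ξ)-Z(a))/|Z(a+ξ)-Z(a)|^d`. -/
theorem pseudo_oddness_estimate
    (d : ℕ) (hd : 2 ≤ d) (γ : ℝ) (hγ : γ ∈ Set.Ioo (0:ℝ) 1)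
    (μ L H r₀ : ℝ) (hμ : 1 ≤ μ) (hL : 0 < L) (hH : 0 < H) (hr₀ : 0 < r₀) :
    ∃ C : ℝ, ∀ (a₀ : EuclideanSpace ℝ (Fin (d - 1)))
      (Z : EuclideanSpace ℝ (Fin (d - 1)) → EuclideanSpace ℝ (Fin d)),
      (∀ a ∈ Metric.ball a₀ (6 * r₀), DifferentiableAt ℝ Z a) →
      (∀ a ∈ Metric.ball a₀ (6 * r₀), ∀ b ∈ Metric.ball a₀ (6 * r₀),
        μ⁻¹ * ‖a - b‖ ≤ ‖Z a - Z b‖ ∧ ‖Z a - Z b‖ ≤ L * ‖a - b‖) →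
      (∀ a ∈ Metric.ball a₀ (6 * r₀), ∀ b ∈ Metric.ball a₀ (6 * r₀),
        ‖fderiv ℝ Z a - fderiv ℝ Z b‖ ≤ H * ‖a - b‖ ^ γ) →
      ∀ a ∈ Metric.ball a₀ (3 * r₀), ∀ ε : ℝ, 0 < ε → ε < 3 * r₀ →
        ‖∫ ξ in {ξ : EuclideanSpace ℝ (Fin (d - 1)) | ε < ‖ξ‖ ∧ ‖ξ‖ < 3 * r₀},
            (‖Z (a + ξ) - Z a‖ ^ d)⁻¹ • (Z (a + ξ) - Z a)‖ ≤ C := by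
  obtain ⟨hγ0, hγ1⟩ := hγ
  set K : ℝ := (μ ^ d + d * L ^ d * μ ^ (2 * d)) * (2 * H) with hK
  have hK0 : 0 ≤ K := by positivity
  have hn : ((d - 1 : ℕ) : ℝ) = d - 1 := by
    rw [Nat.cast_sub (by omega)]; simp
  have : Nonempty (Fin (d - 1)) := ⟨⟨0, by omega⟩⟩
  let g : EuclideanSpace ℝ (Fin (d - 1)) → ℝ :=
    (ball 0 (3 * r₀)).indicator (fun ξ => K * ‖ξ‖ ^ (γ + 1 - d))
  have hg : Integrable g := by
    refine IntegrableOn.integrable_indicator ?_ measurableSet_ball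
    rw [integrableOn_fun_norm_addHaar volume (f := fun y : ℝ => K * y ^ (γ + 1 - d))]
    have h := ((intervalIntegral.integrableOn_Ioo_rpow_iff (s := γ - 1)
      (by positivity : 0 < 3 * r₀)).2 (by linarith)).const_mul K
    refine IntegrableOn.congr_fun (f := fun x => K * x ^ (γ - 1)) h ?_ measurableSet_Ioo
    intro y hy
    have hy0 : 0 < y := hy.1
    simp only [finrank_euclideanSpace, Fintype.card_fin, smul_eq_mul]
    rw [← Real.rpow_natCast, mul_left_comm, ← Real.rpow_add hy0,
      Nat.cast_sub (by omega : 1 ≤ d - 1), hn]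
    congr 2
    push_cast
    ring
  have hg0 : ∀ x, 0 ≤ g x := by
    intro x
    apply indicator_nonneg
    intro y _
    positivity
  refine ⟨∫ x, g x, ?_⟩
  intro a₀ Z hZ hbl hD a ha ε hε hεr
  set A := {ξ : EuclideanSpace ℝ (Fin (d - 1)) | ε < ‖ξ‖ ∧ ‖ξ‖ < 3 * r₀} with hA
  have hAm : MeasurableSet A :=
    (measurableSet_lt measurable_const measurable_norm).inter
      (measurableSet_lt measurable_norm measurable_const)
  rw [← integral_indicator hAm]
  set G := A.indicator (fun ξ => (‖Z (a + ξ) - Z a‖ ^ d)⁻¹ • (Z (a + ξ) - Z a)) with hG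
  by_cases hGi : Integrable G
  swap
  · rw [integral_undef hGi, norm_zero]
    exact integral_nonneg hg0
  have hbound : ∀ ξ, ‖G ξ + G (-ξ)‖ ≤ g ξ := by
    intro ξ
    by_cases hξ : ξ ∈ A
    swap
    · have hξ' : -ξ ∉ A := by simpa [hA] using hξ
      rw [hG, indicator_of_notMem hξ, indicator_of_notMem hξ']
      simpa using hg0 ξ
    have hξ' : -ξ ∈ A := by simpa [hA] using hξ
    have hξ0 : 0 < ‖ξ‖ := hε.trans hξ.1
    have hξb : ξ ∈ ball (0 : EuclideanSpace ℝ (Fin (d - 1))) (3 * r₀) := by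
      simpa using hξ.2
    have h6 : 2 * (3 * r₀) = 6 * r₀ := by ring
    have hmem : ∀ x, ‖x‖ < 3 * r₀ → a + x ∈ ball a₀ (6 * r₀) := by
      intro x hx
      rw [mem_ball] at ha ⊢
      have h1 := dist_triangle (a + x) a a₀
      have h2 : dist (a + x) a = ‖x‖ := by simp [dist_eq_norm]
      linarith
    have ha6 : a ∈ ball a₀ (6 * r₀) := by simpa using hmem 0 (by simp; positivity)
    have b1 := hbl (a + ξ) (hmem ξ hξ.2) a ha6
    have b2 := hbl a ha6 (a + -ξ) (hmem (-ξ) hξ'.2)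
    rw [show a + ξ - a = ξ by abel] at b1
    rw [show a - (a + -ξ) = ξ by abel] at b2
    have s := second_diff_bound γ H (3 * r₀) hγ0 hH a₀ a ξ Z (by rwa [h6]) (by rwa [h6]) ha hξ.2
    rw [sub_eq_add_neg a ξ] at s
    have k := kernel_diff_bound d hd μ L ‖ξ‖ hμ hL hξ0 (Z (a + ξ) - Z a) (Z a - Z (a + -ξ))
      b1.1 b1.2 b2.1 b2.2
    have e : G ξ + G (-ξ) = (‖Z (a + ξ) - Z a‖ ^ d)⁻¹ • (Z (a + ξ) - Z a)
        - (‖Z a - Z (a + -ξ)‖ ^ d)⁻¹ • (Z a - Z (a + -ξ)) := by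
      rw [hG, indicator_of_mem hξ, indicator_of_mem hξ', norm_sub_rev (Z a),
        ← neg_sub (Z (a + -ξ)) (Z a), smul_neg, sub_neg_eq_add]
    have eg : g ξ = K * ‖ξ‖ ^ (γ + 1 - d) := indicator_of_mem hξb _
    rw [e, eg]
    refine k.trans ?_
    rw [Real.rpow_sub hξ0, Real.rpow_add hξ0, Real.rpow_one, Real.rpow_natCast, hK]
    calc _ ≤ (μ ^ d + d * L ^ d * μ ^ (2 * d)) * (‖ξ‖ ^ d)⁻¹ * (2 * H * ‖ξ‖ ^ γ * ‖ξ‖) := by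
          gcongr
      _ = _ := by ring
  have hGn : Integrable (fun ξ => G (-ξ)) := hGi.comp_neg
  have hsum : ∫ ξ, (G ξ + G (-ξ)) = (2 : ℝ) • ∫ ξ, G ξ := by
    rw [integral_add hGi hGn, integral_neg_eq_self, two_smul]
  have hfin := norm_integral_le_of_norm_le hg (Filter.Eventually.of_forall hbound)
  rw [hsum, norm_smul] at hfin
  have : ‖(2 : ℝ)‖ = 2 := by norm_num
  rw [this] at hfin
  linarith [norm_nonneg (∫ ξ, G ξ)]
end

section
/- Hölder bound for the chart commutator operator: let d ≥ 3, γ ∈ (0,1), μ ≥ 1, L > 0, H > 0, r₀ > 0, a₀ ∈ ℝ^{d-1}, and let Z : B(a₀, 6r₀) ⊂ ℝ^{d-1} → ℝ^d be continuously differentiable with (1/μ)|a-b| ≤ |Z(a)-Z(b)| ≤ L|a-b| for all a,b, and ‖DZ‖_γ ≤ H. Fix 1 ≤ j ≤ d-1 and define the commutator kernel C(a,b) = (2-d) (Z(a)-Z(b)) · (∂_j Z(a) - ∂_j Z(b)) / |Z(a)-Z(b)|^d. Then there is a constant C₀, depending only on d, γ, μ, L, H and r₀, such that for every γ-Hölder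 function f supported in B(a₀, 3r₀), the function Cf(a) = ∫_{B(a₀,6r₀)} C(a,b) f(b) db (an absolutely convergent integral) satisfies ‖Cf‖_{γ, B(a₀,3r₀)} ≤ C₀ (‖f‖_{∞} + ‖f‖_{γ}). -/
open MeasureTheory Metric Set
open scoped RealInnerProductSpace
set_option linter.unusedSectionVars false

namespace ChartComm

section integrals
variable {E : Type*} [NormedAddCommGroup E] [NormedSpace ℝ E] [FiniteDimensional ℝ E]
  [MeasurableSpace E] [BorelSpace E] [Nontrivial E] (ν : Measure E) [ν.IsAddHaarMeasure]

lemma pow_mul_rpow {n : ℕ} (hn : 1 ≤ n) {y s : ℝ} (hy : 0 < y) :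
    y ^ (n - 1) * y ^ s = y ^ (s + n - 1) := by
  rw [← Real.rpow_natCast, ← Real.rpow_add hy]
  congr 1
  push_cast [hn]
  ring

lemma near_int {n : ℕ} (hn : Module.finrank ℝ E = n) {γ : ℝ} (hγ : 0 < γ) {R : ℝ} (hR : 0 < R)
    (a : E) :
    Integrable (fun b => (Iio R).indicator (fun t : ℝ => t ^ (γ - n)) ‖a - b‖) ν ∧
    ∫ b, (Iio R).indicator (fun t : ℝ => t ^ (γ - n)) ‖a - b‖ ∂ν
      = n * ν.real (ball 0 1) * (R ^ γ / γ) := by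
  have hn1 : 1 ≤ n := hn ▸ Module.finrank_pos
  have heq : ∀ y ∈ Ioi (0:ℝ), y ^ (n - 1) • (Iio R).indicator (fun t : ℝ => t ^ (γ - n)) y
      = (Iio R).indicator (fun t : ℝ => t ^ (γ - 1)) y := by
    intro y hy
    by_cases h : y ∈ Iio R
    · rw [indicator_of_mem h, indicator_of_mem h, smul_eq_mul, pow_mul_rpow hn1 hy]
      congr 1; ring
    · rw [indicator_of_notMem h, indicator_of_notMem h, smul_zero]
  have hii := intervalIntegral.intervalIntegrable_rpow' (a := 0) (b := R) (r := γ - 1) (by linarith)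
  rw [intervalIntegrable_iff_integrableOn_Ioo_of_le hR.le] at hii
  constructor
  · have : Integrable (fun x : E => (Iio R).indicator (fun t : ℝ => t ^ (γ - n)) ‖x‖) ν := by
      rw [integrable_fun_norm_addHaar (μ := ν) (f := (Iio R).indicator (fun t : ℝ => t ^ (γ - n))), hn,
        integrableOn_congr_fun heq measurableSet_Ioi, IntegrableOn,
        integrable_indicator_iff measurableSet_Iio, IntegrableOn, Measure.restrict_restrict measurableSet_Iio,
        inter_comm, Ioi_inter_Iio]
      exact hii
    exact this.comp_sub_left a
  · rw [integral_sub_left_eq_self (fun x : E => (Iio R).indicator (fun t : ℝ => t ^ (γ - n)) ‖x‖) ν a,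
      integral_fun_norm_addHaar ν ((Iio R).indicator (fun t : ℝ => t ^ (γ - n))), hn,
      setIntegral_congr_fun measurableSet_Ioi heq, setIntegral_indicator measurableSet_Iio,
      Ioi_inter_Iio, ← integral_Ioc_eq_integral_Ioo, ← intervalIntegral.integral_of_le hR.le,
      integral_rpow (Or.inl (by linarith))]
    simp only [nsmul_eq_mul, smul_eq_mul, sub_add_cancel]
    rw [Real.zero_rpow hγ.ne']
    ring

lemma far_int {n : ℕ} (hn : Module.finrank ℝ E = n) {γ : ℝ} (hγ : γ < 1) {R : ℝ} (hR : 0 < R)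
    (a : E) :
    Integrable (fun b => (Ioi R).indicator (fun t : ℝ => t ^ (γ - n - 1)) ‖a - b‖) ν ∧
    ∫ b, (Ioi R).indicator (fun t : ℝ => t ^ (γ - n - 1)) ‖a - b‖ ∂ν
      = n * ν.real (ball 0 1) * (R ^ (γ - 1) / (1 - γ)) := by
  have hn1 : 1 ≤ n := hn ▸ Module.finrank_pos
  have heq : ∀ y ∈ Ioi (0:ℝ), y ^ (n - 1) • (Ioi R).indicator (fun t : ℝ => t ^ (γ - n - 1)) y
      = (Ioi R).indicator (fun t : ℝ => t ^ (γ - 2)) y := by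
    intro y hy
    by_cases h : y ∈ Ioi R
    · rw [indicator_of_mem h, indicator_of_mem h, smul_eq_mul, pow_mul_rpow hn1 hy]
      congr 1; ring
    · rw [indicator_of_notMem h, indicator_of_notMem h, smul_zero]
  have hii := integrableOn_Ioi_rpow_of_lt (a := γ - 2) (by linarith) hR
  have hint : Ioi R ∩ Ioi 0 = Ioi R := by
    rw [Ioi_inter_Ioi]; congr 1; exact max_eq_left hR.le
  constructor
  · have : Integrable (fun x : E => (Ioi R).indicator (fun t : ℝ => t ^ (γ - n - 1)) ‖x‖) ν := by
      rw [integrable_fun_norm_addHaar (μ := ν) (f := (Ioi R).indicator (fun t : ℝ => t ^ (γ - n - 1))), hn,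
        integrableOn_congr_fun heq measurableSet_Ioi, IntegrableOn,
        integrable_indicator_iff measurableSet_Ioi, IntegrableOn, Measure.restrict_restrict measurableSet_Ioi,
        hint]
      exact hii
    exact this.comp_sub_left a
  · rw [integral_sub_left_eq_self (fun x : E => (Ioi R).indicator (fun t : ℝ => t ^ (γ - n - 1)) ‖x‖) ν a,
      integral_fun_norm_addHaar ν ((Ioi R).indicator (fun t : ℝ => t ^ (γ - n - 1))), hn,
      setIntegral_congr_fun measurableSet_Ioi heq, setIntegral_indicator measurableSet_Ioi,
      inter_comm, hint, integral_Ioi_rpow_of_lt (by linarith) hR]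
    simp only [nsmul_eq_mul, smul_eq_mul]
    have e1 : γ - 2 + 1 = γ - 1 := by ring
    have e2 : (1 - γ) ≠ 0 := by linarith
    have e3 : (γ - 1) ≠ 0 := by linarith
    rw [e1, show γ - 1 = -(1 - γ) by ring, neg_div_neg_eq]
    ring
end integrals

section kernel
variable {V : Type*} [NormedAddCommGroup V] [NormedSpace ℝ V]

lemma kernel_lip (d : ℕ) {m : ℝ} (hm : 0 < m) {u v : V} (hu : m ≤ ‖u‖) (hv : m ≤ ‖v‖) :
    ‖(‖u‖⁻¹ ^ d) • u - (‖v‖⁻¹ ^ d) • v‖ ≤ (d + 1) * m⁻¹ ^ d * ‖u - v‖ := by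
  have hu0 : 0 < ‖u‖ := hm.trans_le hu
  have hv0 : 0 < ‖v‖ := hm.trans_le hv
  have hs : ‖u‖⁻¹ ≤ m⁻¹ := inv_anti₀ hm hu
  have ht : ‖v‖⁻¹ ≤ m⁻¹ := inv_anti₀ hm hv
  induction d with
  | zero => simp
  | succ d ih =>
    have hst : |‖u‖⁻¹ - ‖v‖⁻¹| ≤ ‖u‖⁻¹ * ‖v‖⁻¹ * ‖u - v‖ := by
      have : ‖u‖⁻¹ - ‖v‖⁻¹ = ‖u‖⁻¹ * ‖v‖⁻¹ * (‖v‖ - ‖u‖) := by field_simp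
      rw [this, abs_mul, abs_of_pos (by positivity)]
      gcongr
      rw [norm_sub_rev]
      exact abs_norm_sub_norm_le v u
    have hdec : (‖u‖⁻¹ ^ (d+1)) • u - (‖v‖⁻¹ ^ (d+1)) • v
        = ‖u‖⁻¹ • ((‖u‖⁻¹ ^ d) • u - (‖v‖⁻¹ ^ d) • v) + ((‖u‖⁻¹ - ‖v‖⁻¹) * ‖v‖⁻¹ ^ d) • v := by
      simp only [smul_sub, smul_smul, sub_mul, sub_smul, pow_succ']
      abel
    have h2 : ‖((‖u‖⁻¹ - ‖v‖⁻¹) * ‖v‖⁻¹ ^ d) • v‖ ≤ m⁻¹ ^ (d+1) * ‖u - v‖ := by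
      rw [norm_smul, norm_mul, Real.norm_eq_abs, norm_pow, norm_inv, norm_norm]
      calc |‖u‖⁻¹ - ‖v‖⁻¹| * ‖v‖⁻¹ ^ d * ‖v‖
          ≤ (‖u‖⁻¹ * ‖v‖⁻¹ * ‖u - v‖) * ‖v‖⁻¹ ^ d * ‖v‖ := by gcongr
        _ = ‖u‖⁻¹ * ‖v‖⁻¹ ^ d * ‖u - v‖ := by field_simp
        _ ≤ m⁻¹ * m⁻¹ ^ d * ‖u - v‖ := by gcongr
        _ = _ := by rw [pow_succ']
    rw [hdec]
    calc _ ≤ ‖‖u‖⁻¹ • ((‖u‖⁻¹ ^ d) • u - (‖v‖⁻¹ ^ d) • v)‖ + _ := norm_add_le _ _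
      _ ≤ m⁻¹ * ((d + 1) * m⁻¹ ^ d * ‖u - v‖) + m⁻¹ ^ (d+1) * ‖u - v‖ := by
        gcongr
        rw [norm_smul, norm_inv, norm_norm]
        gcongr
      _ = _ := by push_cast; ring

end kernel

section geom
variable {E V : Type*} [NormedAddCommGroup E] [NormedSpace ℝ E]
  [NormedAddCommGroup V] [NormedSpace ℝ V]

lemma taylor {a₀ : E} {r H γ : ℝ} (hγ : 0 < γ) (hH : 0 < H) {Z : E → V}
    (hZ : ∀ a ∈ ball a₀ r, DifferentiableAt ℝ Z a)
    (hD : ∀ a ∈ ball a₀ r, ∀ b ∈ ball a₀ r, ‖fderiv ℝ Z a - fderiv ℝ Z b‖ ≤ H * ‖a - b‖ ^ γ)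
    {a b : E} (ha : a ∈ ball a₀ r) (hb : b ∈ ball a₀ r) :
    ‖(Z a - Z b) - fderiv ℝ Z a (a - b)‖ ≤ H * ‖a - b‖ ^ γ * ‖a - b‖ := by
  have hs : Convex ℝ (ball a₀ r ∩ closedBall a ‖a - b‖) :=
    (convex_ball _ _).inter (convex_closedBall _ _)
  refine hs.norm_image_sub_le_of_norm_hasFDerivWithin_le' (f' := fderiv ℝ Z)
    (fun x hx => (hZ x hx.1).hasFDerivAt.hasFDerivWithinAt) (fun x hx => ?_) ?_ ?_
  · refine (hD x hx.1 a ha).trans ?_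
    gcongr
    simpa [dist_eq_norm] using hx.2
  · exact ⟨hb, by simp [dist_eq_norm, norm_sub_rev]⟩
  · exact ⟨ha, by simp⟩

lemma fderiv_lower {a₀ : E} {r c : ℝ} {Z : E → V}
    (hZ : ∀ a ∈ ball a₀ r, DifferentiableAt ℝ Z a)
    (hB : ∀ a ∈ ball a₀ r, ∀ b ∈ ball a₀ r, c * ‖a - b‖ ≤ ‖Z a - Z b‖)
    {a : E} (ha : a ∈ ball a₀ r) (v : E) : c * ‖v‖ ≤ ‖fderiv ℝ Z a v‖ := by
  have hl := ((hZ a ha).hasFDerivAt.lim v (c := fun n : ℝ => n) (l := Filter.atTop)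
    Filter.tendsto_abs_atTop_atTop).norm
  refine ge_of_tendsto hl ?_
  have h1 : Filter.Tendsto (fun n : ℝ => a + n⁻¹ • v) Filter.atTop (nhds (a + (0:ℝ) • v)) :=
    (tendsto_inv_atTop_zero.smul_const v).const_add a
  rw [zero_smul, add_zero] at h1
  filter_upwards [h1 (isOpen_ball.mem_nhds ha), Filter.eventually_gt_atTop 0] with n hn hn0
  have := hB _ hn a ha
  rw [norm_smul, Real.norm_of_nonneg hn0.le]
  rw [add_sub_cancel_left, norm_smul, norm_inv, Real.norm_of_nonneg hn0.le] at this
  calc c * ‖v‖ = n * (c * (n⁻¹ * ‖v‖)) := by field_simp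
    _ ≤ _ := by gcongr

end geom

section pointwise
variable {E V : Type*} [NormedAddCommGroup E] [NormedSpace ℝ E]
  [NormedAddCommGroup V] [InnerProductSpace ℝ V]

/-- The vector kernel `u / |u|^d`. -/
noncomputable def ker (d : ℕ) (u : V) : V := (‖u‖⁻¹ ^ d) • u

lemma inner_div_eq (d : ℕ) (u w : V) :
    (2 - (d:ℝ)) * ⟪u, w⟫ / ‖u‖ ^ d = (2 - (d:ℝ)) * ⟪ker d u, w⟫ := by
  rw [ker, real_inner_smul_left, inv_pow]
  ring

lemma norm_ker (n : ℕ) {m : ℝ} (hm : 0 < m) {u : V} (hu : m ≤ ‖u‖) :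
    ‖ker (n + 1) u‖ ≤ m⁻¹ ^ n := by
  have hu0 : 0 < ‖u‖ := hm.trans_le hu
  have hs : ‖u‖⁻¹ ≤ m⁻¹ := inv_anti₀ hm hu
  rw [ker, norm_smul, norm_pow, norm_inv, norm_norm]
  calc ‖u‖⁻¹ ^ (n+1) * ‖u‖ = ‖u‖⁻¹ ^ n := by rw [pow_succ]; field_simp
    _ ≤ _ := by gcongr

lemma ker_neg (d : ℕ) (u : V) : ker d (-u) = - ker d u := by simp [ker]

lemma inv_pow_mul_rpow {ρ γ : ℝ} (hρ : 0 < ρ) (n : ℕ) : ρ⁻¹ ^ n * ρ ^ γ = ρ ^ (γ - n) := by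
  rw [Real.rpow_sub hρ, Real.rpow_natCast, inv_pow]
  field_simp

lemma abs_two_sub (n : ℕ) (hn : 1 ≤ n) : |2 - ((n + 1 : ℕ):ℝ)| ≤ n := by
  have : (1:ℝ) ≤ n := by exact_mod_cast hn
  rw [abs_le]; push_cast; constructor <;> linarith

lemma size_bound {n : ℕ} (hn : 1 ≤ n) {μ H γ : ℝ} (hμ : 1 ≤ μ) (hH : 0 < H)
    {B : Set E} {Z T : E → V}
    (hB : ∀ a ∈ B, ∀ b ∈ B, μ⁻¹ * ‖a - b‖ ≤ ‖Z a - Z b‖)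
    (hT : ∀ a ∈ B, ∀ b ∈ B, ‖T a - T b‖ ≤ H * ‖a - b‖ ^ γ)
    {a b : E} (ha : a ∈ B) (hb : b ∈ B) :
    |(2 - ((n + 1 : ℕ):ℝ)) * ⟪ker (n + 1) (Z a - Z b), T a - T b⟫|
      ≤ n * μ ^ n * H * ‖a - b‖ ^ (γ - n) := by
  have hμ0 : 0 < μ := by linarith
  rcases eq_or_ne a b with rfl | hab
  · simp; positivity
  have hρ : 0 < ‖a - b‖ := norm_pos_iff.2 (sub_ne_zero.2 hab)
  have h1 := norm_ker n (by positivity) (hB a ha b hb)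
  rw [abs_mul]
  calc _ ≤ (n:ℝ) * (‖ker (n + 1) (Z a - Z b)‖ * ‖T a - T b‖) := by
        gcongr
        · exact abs_two_sub n hn
        · exact abs_real_inner_le_norm _ _
    _ ≤ (n:ℝ) * ((μ⁻¹ * ‖a - b‖)⁻¹ ^ n * (H * ‖a - b‖ ^ γ)) := by
        gcongr
        exact hT a ha b hb
    _ = n * μ ^ n * H * (‖a - b‖⁻¹ ^ n * ‖a - b‖ ^ γ) := by
        rw [mul_inv, inv_inv, mul_pow]; ring
    _ = _ := by rw [inv_pow_mul_rpow hρ]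

lemma far_bound {n : ℕ} {μ L H γ : ℝ} (hγ : γ ∈ Ioo (0:ℝ) 1) (hμ : 1 ≤ μ) (hL : 0 < L) (hH : 0 < H)
    {B : Set E} {Z T : E → V}
    (hB : ∀ a ∈ B, ∀ b ∈ B, μ⁻¹ * ‖a - b‖ ≤ ‖Z a - Z b‖ ∧ ‖Z a - Z b‖ ≤ L * ‖a - b‖)
    (hT : ∀ a ∈ B, ∀ b ∈ B, ‖T a - T b‖ ≤ H * ‖a - b‖ ^ γ)
    {a a' b : E} (ha : a ∈ B) (ha' : a' ∈ B) (hb : b ∈ B)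
    (hδ : 0 < ‖a - a'‖) (hfar : 2 * ‖a - a'‖ ≤ ‖a' - b‖) :
    |⟪ker (n + 1) (Z a - Z b) - ker (n + 1) (Z a' - Z b), T a - T b⟫|
      ≤ (n + 2) * (2 * μ) ^ (n + 1) * L * (2 * H) * ‖a - a'‖ * ‖a' - b‖ ^ (γ - n - 1) := by
  have hμ0 : 0 < μ := by linarith
  set ρ := ‖a' - b‖
  set δ := ‖a - a'‖
  have hρ : 0 < ρ := by linarith
  have hab1 : ρ - δ ≤ ‖a - b‖ := by
    have : ‖a' - b‖ ≤ ‖a - b‖ + ‖a - a'‖ := by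
      calc ‖a' - b‖ = ‖(a - b) - (a - a')‖ := by congr 1; abel
        _ ≤ _ := norm_sub_le _ _
    linarith
  have hab2 : ‖a - b‖ ≤ δ + ρ := by
    calc ‖a - b‖ = ‖(a - a') + (a' - b)‖ := by congr 1; abel
      _ ≤ _ := norm_add_le _ _
  have hu : (2 * μ)⁻¹ * ρ ≤ ‖Z a - Z b‖ := by
    refine le_trans ?_ (hB a ha b hb).1
    rw [mul_inv, mul_comm 2⁻¹, mul_assoc]
    gcongr
    linarith
  have hv : (2 * μ)⁻¹ * ρ ≤ ‖Z a' - Z b‖ := by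
    refine le_trans ?_ (hB a' ha' b hb).1
    gcongr
    linarith
  have h1 := kernel_lip (n + 1) (by positivity) hu hv
  have h2 : ‖(Z a - Z b) - (Z a' - Z b)‖ ≤ L * δ := by
    rw [sub_sub_sub_cancel_right]; exact (hB a ha a' ha').2
  have h3 : ‖T a - T b‖ ≤ 2 * H * ρ ^ γ := by
    refine (hT a ha b hb).trans ?_
    have : ‖a - b‖ ^ γ ≤ 2 * ρ ^ γ := by
      calc ‖a - b‖ ^ γ ≤ (2 * ρ) ^ γ :=
            Real.rpow_le_rpow (norm_nonneg _) (by linarith) hγ.1.le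
        _ = 2 ^ γ * ρ ^ γ := Real.mul_rpow (by norm_num) hρ.le
        _ ≤ 2 ^ (1:ℝ) * ρ ^ γ := by
            gcongr
            · norm_num
            · exact hγ.2.le
        _ = _ := by rw [Real.rpow_one]
    nlinarith
  calc _ ≤ ‖ker (n + 1) (Z a - Z b) - ker (n + 1) (Z a' - Z b)‖ * ‖T a - T b‖ :=
        abs_real_inner_le_norm _ _
    _ ≤ (((n + 1 : ℕ):ℝ) + 1) * ((2 * μ)⁻¹ * ρ)⁻¹ ^ (n + 1) * (L * δ) * (2 * H * ρ ^ γ) := by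
        gcongr
        refine h1.trans ?_
        gcongr
    _ = (n + 2) * (2 * μ) ^ (n + 1) * L * (2 * H) * δ * (ρ⁻¹ ^ (n + 1) * ρ ^ γ) := by
        rw [mul_inv, inv_inv, mul_pow]; push_cast; ring
    _ = _ := by
        rw [inv_pow_mul_rpow hρ]; congr 2; push_cast; ring

lemma sing_bound {n : ℕ} {μ H γ r F Hf : ℝ} (hγ : γ ∈ Ioo (0:ℝ) 1) (hμ : 1 ≤ μ)
    (hH : 0 < H) (hr : 0 < r) (hF : 0 ≤ F) (hHf : 0 ≤ Hf)
    {u v : V} {ρ x y : ℝ} (hρ : 0 < ρ) (hu : μ⁻¹ * ρ ≤ ‖u‖) (hv : μ⁻¹ * ρ ≤ ‖v‖)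
    (huv : ‖u - v‖ ≤ H * ρ ^ γ * ρ) (hx : |x - y| ≤ Hf * ρ ^ γ) (hy : |y| ≤ F) :
    ‖x • ker (n + 1) u - (if ρ < r then y else 0) • ker (n + 1) v‖
      ≤ (μ ^ n + (n + 2) * μ ^ (n + 1) * H + μ ^ n * (r ^ γ)⁻¹) * (F + Hf) * ρ ^ (γ - n) := by
  have hμ0 : 0 < μ := by linarith
  have hk := norm_ker n (by positivity) hu
  have hrg : 0 < r ^ γ := Real.rpow_pos_of_pos hr γ
  have hρg : 0 < ρ ^ γ := Real.rpow_pos_of_pos hρ γ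
  rw [mul_inv, inv_inv, mul_pow] at hk
  have h1 : ‖(x - y) • ker (n + 1) u‖ ≤ μ ^ n * (F + Hf) * ρ ^ (γ - n) := by
    rw [norm_smul, Real.norm_eq_abs]
    calc _ ≤ (Hf * ρ ^ γ) * (μ ^ n * ρ⁻¹ ^ n) := by gcongr
      _ = μ ^ n * Hf * (ρ⁻¹ ^ n * ρ ^ γ) := by ring
      _ ≤ μ ^ n * (F + Hf) * (ρ⁻¹ ^ n * ρ ^ γ) := by gcongr; linarith
      _ = _ := by rw [inv_pow_mul_rpow hρ]
  have hnn : 0 ≤ ρ ^ (γ - n) := (Real.rpow_pos_of_pos hρ _).le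
  have hFH : 0 ≤ F + Hf := by linarith
  split_ifs with h
  · have hkl := kernel_lip (n + 1) (by positivity) hu hv
    have h2 : ‖y • (ker (n + 1) u - ker (n + 1) v)‖
        ≤ (n + 2) * μ ^ (n + 1) * H * (F + Hf) * ρ ^ (γ - n) := by
      rw [norm_smul, Real.norm_eq_abs]
      calc _ ≤ (F + Hf) * ((((n + 1 : ℕ):ℝ) + 1) * (μ⁻¹ * ρ)⁻¹ ^ (n + 1) * (H * ρ ^ γ * ρ)) := by
            gcongr
            · linarith
            · refine hkl.trans ?_
              gcongr
        _ = (n + 2) * μ ^ (n + 1) * H * (F + Hf) * (ρ⁻¹ ^ n * ρ ^ γ) := by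
            rw [mul_inv, inv_inv, mul_pow, pow_succ ρ⁻¹]; push_cast; field_simp; ring
        _ = _ := by rw [inv_pow_mul_rpow hρ]
    have e : x • ker (n + 1) u - y • ker (n + 1) v
        = (x - y) • ker (n + 1) u + y • (ker (n + 1) u - ker (n + 1) v) := by
      rw [smul_sub, sub_smul]; abel
    rw [e]
    have h3 : 0 ≤ μ ^ n * (r ^ γ)⁻¹ * (F + Hf) * ρ ^ (γ - n) := by positivity
    have := norm_add_le ((x - y) • ker (n + 1) u) (y • (ker (n + 1) u - ker (n + 1) v))
    linarith
  · have h2 : ‖y • ker (n + 1) u‖ ≤ μ ^ n * (r ^ γ)⁻¹ * (F + Hf) * ρ ^ (γ - n) := by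
      rw [norm_smul, Real.norm_eq_abs]
      have h4 : 1 ≤ (r ^ γ)⁻¹ * ρ ^ γ := by
        rw [inv_mul_eq_div, one_le_div hrg]
        exact Real.rpow_le_rpow hr.le (not_lt.1 h) hγ.1.le
      calc _ ≤ (F + Hf) * (μ ^ n * ρ⁻¹ ^ n) := by gcongr; linarith
        _ = (F + Hf) * (μ ^ n * ρ⁻¹ ^ n) * 1 := by ring
        _ ≤ (F + Hf) * (μ ^ n * ρ⁻¹ ^ n) * ((r ^ γ)⁻¹ * ρ ^ γ) := by gcongr
        _ = μ ^ n * (r ^ γ)⁻¹ * (F + Hf) * (ρ⁻¹ ^ n * ρ ^ γ) := by ring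
        _ = _ := by rw [inv_pow_mul_rpow hρ]
    have e : x • ker (n + 1) u - (0:ℝ) • ker (n + 1) v
        = (x - y) • ker (n + 1) u + y • ker (n + 1) u := by
      rw [zero_smul, sub_smul]; abel
    rw [e]
    have h3 : 0 ≤ (n + 2) * μ ^ (n + 1) * H * (F + Hf) * ρ ^ (γ - n) := by positivity
    have := norm_add_le ((x - y) • ker (n + 1) u) (y • ker (n + 1) u)
    linarith

end pointwise

section core
variable {E V : Type*} [NormedAddCommGroup E] [NormedSpace ℝ E]
  [NormedAddCommGroup V] [InnerProductSpace ℝ V]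

/-- The odd (principal) part of the difference of kernels. -/
noncomputable def oddPart (n : ℕ) (A : E →L[ℝ] V) (y s r : ℝ) (w : V) (x : E) : ℝ :=
  if s ≤ ‖x‖ ∧ ‖x‖ < r then (2 - ((n + 1 : ℕ):ℝ)) * (y * ⟪ker (n + 1) (A x), w⟫) else 0

lemma oddPart_neg (n : ℕ) (A : E →L[ℝ] V) (y s r : ℝ) (w : V) (x : E) :
    oddPart n A y s r w (-x) = - oddPart n A y s r w x := by
  unfold oddPart
  rw [norm_neg, map_neg, ker_neg, inner_neg_left]
  split_ifs <;> ring

lemma combine {n : ℕ} (hn : 1 ≤ n) {μ L H γ r₀ F Hf : ℝ} (hγ : γ ∈ Ioo (0:ℝ) 1) (hμ : 1 ≤ μ)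
    (hL : 0 < L) (hH : 0 < H) (hr₀ : 0 < r₀) (hF : 0 ≤ F) (hHf : 0 ≤ Hf)
    {a₀ : E} {Z T : E → V}
    (hZ : ∀ a ∈ ball a₀ (6 * r₀), DifferentiableAt ℝ Z a)
    (hB : ∀ a ∈ ball a₀ (6 * r₀), ∀ b ∈ ball a₀ (6 * r₀),
      μ⁻¹ * ‖a - b‖ ≤ ‖Z a - Z b‖ ∧ ‖Z a - Z b‖ ≤ L * ‖a - b‖)
    (hD : ∀ a ∈ ball a₀ (6 * r₀), ∀ b ∈ ball a₀ (6 * r₀),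
      ‖fderiv ℝ Z a - fderiv ℝ Z b‖ ≤ H * ‖a - b‖ ^ γ)
    (hT : ∀ a ∈ ball a₀ (6 * r₀), ∀ b ∈ ball a₀ (6 * r₀), ‖T a - T b‖ ≤ H * ‖a - b‖ ^ γ)
    {f : E → ℝ} (hfF : ∀ b, |f b| ≤ F) (hfH : ∀ b b', |f b - f b'| ≤ Hf * ‖b - b'‖ ^ γ)
    {a a' b : E} (ha : a ∈ ball a₀ (6 * r₀)) (ha' : a' ∈ ball a₀ (3 * r₀))
    (hb : b ∈ ball a₀ (6 * r₀)) (hδ : 0 < ‖a - a'‖) :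
    |(2 - ((n + 1 : ℕ):ℝ)) * ⟪ker (n + 1) (Z a - Z b), T a - T b⟫ * f b
      - (2 - ((n + 1 : ℕ):ℝ)) * ⟪ker (n + 1) (Z a' - Z b), T a' - T b⟫ * f b
      - oddPart n (fderiv ℝ Z a') (f a') (2 * ‖a - a'‖) (3 * r₀) (T a - T a') (a' - b)|
    ≤ n * μ ^ n * H * F * (Iio (3 * ‖a - a'‖)).indicator (fun t : ℝ => t ^ (γ - n)) ‖a - b‖
      + n * μ ^ n * H * F * (Iio (3 * ‖a - a'‖)).indicator (fun t : ℝ => t ^ (γ - n)) ‖a' - b‖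
      + n * ((n + 2) * (2 * μ) ^ (n + 1) * L * (2 * H)) * F * ‖a - a'‖ *
          (Ioi ‖a - a'‖).indicator (fun t : ℝ => t ^ (γ - n - 1)) ‖a' - b‖
      + n * (μ ^ n + (n + 2) * μ ^ (n + 1) * H + μ ^ n * ((3 * r₀) ^ γ)⁻¹) * H * (F + Hf)
          * ‖a - a'‖ ^ γ * (Iio (9 * r₀)).indicator (fun t : ℝ => t ^ (γ - n)) ‖a' - b‖ := by
  have hμ0 : 0 < μ := by linarith
  have ha6 : a' ∈ ball a₀ (6 * r₀) := ball_subset_ball (by linarith) ha'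
  have hB1 := fun x hx y hy => (hB x hx y hy).1
  have hρ9 : ‖a' - b‖ < 9 * r₀ := by
    rw [mem_ball] at ha' hb
    have := dist_triangle_right a' b a₀
    rw [← dist_eq_norm]; linarith
  have i1 : 0 ≤ (Iio (3 * ‖a - a'‖)).indicator (fun t : ℝ => t ^ (γ - n)) ‖a - b‖ :=
    indicator_apply_nonneg fun _ => Real.rpow_nonneg (norm_nonneg _) _
  have i2 : 0 ≤ (Iio (3 * ‖a - a'‖)).indicator (fun t : ℝ => t ^ (γ - n)) ‖a' - b‖ :=
    indicator_apply_nonneg fun _ => Real.rpow_nonneg (norm_nonneg _) _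
  have i3 : 0 ≤ (Ioi ‖a - a'‖).indicator (fun t : ℝ => t ^ (γ - n - 1)) ‖a' - b‖ :=
    indicator_apply_nonneg fun _ => Real.rpow_nonneg (norm_nonneg _) _
  have hδg : 0 ≤ ‖a - a'‖ ^ γ := Real.rpow_nonneg (norm_nonneg _) _
  have h3g : 0 ≤ ((3 * r₀) ^ γ)⁻¹ := inv_nonneg.2 (Real.rpow_nonneg (by linarith) _)
  have h4 : (Iio (9 * r₀)).indicator (fun t : ℝ => t ^ (γ - n)) ‖a' - b‖ = ‖a' - b‖ ^ (γ - n) :=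
    indicator_of_mem (mem_Iio.2 hρ9) _
  have i4 : 0 ≤ ‖a' - b‖ ^ (γ - n) := Real.rpow_nonneg (norm_nonneg _) _
  rw [h4]
  rcases lt_or_ge ‖a' - b‖ (2 * ‖a - a'‖) with hnear | hfar
  · have ho : oddPart n (fderiv ℝ Z a') (f a') (2 * ‖a - a'‖) (3 * r₀) (T a - T a') (a' - b) = 0 :=
      if_neg fun h => absurd h.1 (not_le.2 hnear)
    have hab : ‖a - b‖ < 3 * ‖a - a'‖ := by
      calc ‖a - b‖ = ‖(a - a') + (a' - b)‖ := by congr 1; abel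
        _ ≤ _ := norm_add_le _ _
        _ < _ := by linarith
    have e1 : (Iio (3 * ‖a - a'‖)).indicator (fun t : ℝ => t ^ (γ - n)) ‖a - b‖
        = ‖a - b‖ ^ (γ - n) := indicator_of_mem (mem_Iio.2 hab) _
    have e2 : (Iio (3 * ‖a - a'‖)).indicator (fun t : ℝ => t ^ (γ - n)) ‖a' - b‖
        = ‖a' - b‖ ^ (γ - n) := indicator_of_mem (mem_Iio.2 (by linarith)) _
    have s1 := size_bound hn hμ hH hB1 hT ha hb
    have s2 := size_bound hn hμ hH hB1 hT ha6 hb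
    rw [ho, sub_zero, e1, e2]
    have p3 : 0 ≤ n * ((n + 2) * (2 * μ) ^ (n + 1) * L * (2 * H)) * F * ‖a - a'‖ *
          (Ioi ‖a - a'‖).indicator (fun t : ℝ => t ^ (γ - n - 1)) ‖a' - b‖ := by positivity
    have p4 : 0 ≤ n * (μ ^ n + (n + 2) * μ ^ (n + 1) * H + μ ^ n * ((3 * r₀) ^ γ)⁻¹) * H * (F + Hf)
          * ‖a - a'‖ ^ γ * ‖a' - b‖ ^ (γ - n) := by positivity
    have t1 : |(2 - ((n + 1 : ℕ):ℝ)) * ⟪ker (n + 1) (Z a - Z b), T a - T b⟫ * f b|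
        ≤ (n * μ ^ n * H * ‖a - b‖ ^ (γ - n)) * F := by
      rw [abs_mul]
      exact mul_le_mul s1 (hfF b) (abs_nonneg _) ((abs_nonneg _).trans s1)
    have t2 : |(2 - ((n + 1 : ℕ):ℝ)) * ⟪ker (n + 1) (Z a' - Z b), T a' - T b⟫ * f b|
        ≤ (n * μ ^ n * H * ‖a' - b‖ ^ (γ - n)) * F := by
      rw [abs_mul]
      exact mul_le_mul s2 (hfF b) (abs_nonneg _) ((abs_nonneg _).trans s2)
    have := abs_sub ((2 - ((n + 1 : ℕ):ℝ)) * ⟪ker (n + 1) (Z a - Z b), T a - T b⟫ * f b)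
      ((2 - ((n + 1 : ℕ):ℝ)) * ⟪ker (n + 1) (Z a' - Z b), T a' - T b⟫ * f b)
    linarith
  · have hρ : 0 < ‖a' - b‖ := by linarith
    have e3 : (Ioi ‖a - a'‖).indicator (fun t : ℝ => t ^ (γ - n - 1)) ‖a' - b‖
        = ‖a' - b‖ ^ (γ - n - 1) := indicator_of_mem (mem_Ioi.2 (by linarith)) _
    rw [e3] at i3 ⊢
    have fb := far_bound (n := n) hγ hμ hL hH hB hT ha ha6 hb hδ hfar
    have sb := sing_bound (n := n) hγ hμ hH (r := 3 * r₀) (by linarith) hF hHf hρ (hB1 a' ha6 b hb)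
      (fderiv_lower hZ hB1 ha6 (a' - b)) (taylor hγ.1 hH hZ hD ha6 hb)
      (x := f b) (y := f a') (by rw [norm_sub_rev]; exact hfH b a') (hfF a')
    have dec : (2 - ((n + 1 : ℕ):ℝ)) * ⟪ker (n + 1) (Z a - Z b), T a - T b⟫ * f b
      - (2 - ((n + 1 : ℕ):ℝ)) * ⟪ker (n + 1) (Z a' - Z b), T a' - T b⟫ * f b
      - oddPart n (fderiv ℝ Z a') (f a') (2 * ‖a - a'‖) (3 * r₀) (T a - T a') (a' - b)
      = (2 - ((n + 1 : ℕ):ℝ)) *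
        (⟪ker (n + 1) (Z a - Z b) - ker (n + 1) (Z a' - Z b), T a - T b⟫ * f b
        + ⟪f b • ker (n + 1) (Z a' - Z b) - (if ‖a' - b‖ < 3 * r₀ then f a' else 0) •
          ker (n + 1) (fderiv ℝ Z a' (a' - b)), T a - T a'⟫) := by
      have ho : oddPart n (fderiv ℝ Z a') (f a') (2 * ‖a - a'‖) (3 * r₀) (T a - T a') (a' - b)
        = (2 - ((n + 1 : ℕ):ℝ)) * ((if ‖a' - b‖ < 3 * r₀ then f a' else 0) *
          ⟪ker (n + 1) (fderiv ℝ Z a' (a' - b)), T a - T a'⟫) := by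
        unfold oddPart
        by_cases h : ‖a' - b‖ < 3 * r₀ <;> simp [h, hfar]
      rw [ho]
      simp only [inner_sub_left, inner_sub_right, real_inner_smul_left]
      ring
    rw [dec, abs_mul]
    have q1 : |⟪ker (n + 1) (Z a - Z b) - ker (n + 1) (Z a' - Z b), T a - T b⟫ * f b|
        ≤ (n + 2) * (2 * μ) ^ (n + 1) * L * (2 * H) * ‖a - a'‖ * ‖a' - b‖ ^ (γ - n - 1) * F := by
      rw [abs_mul]
      exact mul_le_mul fb (hfF b) (abs_nonneg _) ((abs_nonneg _).trans fb)
    have q2 : |⟪f b • ker (n + 1) (Z a' - Z b) - (if ‖a' - b‖ < 3 * r₀ then f a' else 0) •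
          ker (n + 1) (fderiv ℝ Z a' (a' - b)), T a - T a'⟫|
        ≤ (μ ^ n + (n + 2) * μ ^ (n + 1) * H + μ ^ n * ((3 * r₀) ^ γ)⁻¹) * (F + Hf)
          * ‖a' - b‖ ^ (γ - n) * (H * ‖a - a'‖ ^ γ) :=
      (abs_real_inner_le_norm _ _).trans
        (mul_le_mul sb (hT a ha a' ha6) (norm_nonneg _) ((norm_nonneg _).trans sb))
    have p12 : 0 ≤ n * μ ^ n * H * F *
        (Iio (3 * ‖a - a'‖)).indicator (fun t : ℝ => t ^ (γ - n)) ‖a - b‖ := by positivity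
    have p13 : 0 ≤ n * μ ^ n * H * F *
        (Iio (3 * ‖a - a'‖)).indicator (fun t : ℝ => t ^ (γ - n)) ‖a' - b‖ := by positivity
    have q3 := (abs_add_le (⟪ker (n + 1) (Z a - Z b) - ker (n + 1) (Z a' - Z b), T a - T b⟫ * f b)
      ⟪f b • ker (n + 1) (Z a' - Z b) - (if ‖a' - b‖ < 3 * r₀ then f a' else 0) •
          ker (n + 1) (fderiv ℝ Z a' (a' - b)), T a - T a'⟫).trans (add_le_add q1 q2)
    have q4 := mul_le_mul (abs_two_sub n hn) q3 (abs_nonneg _) (by positivity)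
    linarith

lemma cont_of_holder {f : E → ℝ} {Hf γ : ℝ} (hγ : 0 < γ)
    (hfH : ∀ b b', |f b - f b'| ≤ Hf * ‖b - b'‖ ^ γ) : Continuous f := by
  rw [continuous_iff_continuousAt]
  intro x
  rw [ContinuousAt, tendsto_iff_norm_sub_tendsto_zero]
  have h : Filter.Tendsto (fun b => Hf * ‖b - x‖ ^ γ) (nhds x) (nhds (Hf * ‖x - x‖ ^ γ)) := by
    apply Continuous.tendsto (f := fun b => Hf * ‖b - x‖ ^ γ)
    exact continuous_const.mul
      ((continuous_id.sub continuous_const).norm.rpow_const fun _ => Or.inr hγ.le)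
  rw [sub_self, norm_zero, Real.zero_rpow hγ.ne', mul_zero] at h
  exact squeeze_zero (fun _ => norm_nonneg _) (fun b => hfH b x) h

variable [FiniteDimensional ℝ E]
  [MeasurableSpace E] [BorelSpace E] [Nontrivial E] (ν : Measure E) [ν.IsAddHaarMeasure]

lemma kernel_integrable {n : ℕ} (hn : Module.finrank ℝ E = n) {μ H γ r₀ F : ℝ}
    (hγ : γ ∈ Ioo (0:ℝ) 1) (hμ : 1 ≤ μ)
    (hH : 0 < H) (hr₀ : 0 < r₀)
    {a₀ : E} {Z T : E → V} (hTm : StronglyMeasurable T)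
    (hZ : ∀ a ∈ ball a₀ (6 * r₀), DifferentiableAt ℝ Z a)
    (hB : ∀ a ∈ ball a₀ (6 * r₀), ∀ b ∈ ball a₀ (6 * r₀), μ⁻¹ * ‖a - b‖ ≤ ‖Z a - Z b‖)
    (hT : ∀ a ∈ ball a₀ (6 * r₀), ∀ b ∈ ball a₀ (6 * r₀), ‖T a - T b‖ ≤ H * ‖a - b‖ ^ γ)
    {f : E → ℝ} (hfF : ∀ b, |f b| ≤ F) (hfc : Continuous f)
    {a : E} (ha : a ∈ ball a₀ (3 * r₀)) :
    IntegrableOn (fun b => (2 - ((n + 1 : ℕ):ℝ)) * ⟪ker (n + 1) (Z a - Z b), T a - T b⟫ * f b)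
      (ball a₀ (6 * r₀)) ν := by
  have hn1 : 1 ≤ n := hn ▸ Module.finrank_pos
  have ha6 : a ∈ ball a₀ (6 * r₀) := ball_subset_ball (by linarith) ha
  have hdom := ((near_int ν hn hγ.1 (R := 9 * r₀) (by linarith) a).1.const_mul
    (n * μ ^ n * H * F)).integrableOn (s := ball a₀ (6 * r₀))
  refine hdom.mono' ?_ ?_
  · have hZc : ContinuousOn Z (ball a₀ (6 * r₀)) :=
      fun x hx => (hZ x hx).continuousAt.continuousWithinAt
    have hZm : AEStronglyMeasurable Z (ν.restrict (ball a₀ (6 * r₀))) :=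
      hZc.aestronglyMeasurable measurableSet_ball
    have hu : AEStronglyMeasurable (fun b => Z a - Z b) (ν.restrict (ball a₀ (6 * r₀))) :=
      aestronglyMeasurable_const.sub hZm
    have hw : AEStronglyMeasurable (fun b => T a - T b) (ν.restrict (ball a₀ (6 * r₀))) :=
      aestronglyMeasurable_const.sub hTm.aestronglyMeasurable
    have hk : AEStronglyMeasurable (fun b => ker (n + 1) (Z a - Z b))
        (ν.restrict (ball a₀ (6 * r₀))) :=
      ((hu.norm.aemeasurable.inv.pow_const (n + 1)).aestronglyMeasurable).smul hu
    exact ((hk.inner hw).const_mul _).mul hfc.aestronglyMeasurable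
  · refine (ae_restrict_iff' measurableSet_ball).2 (Filter.Eventually.of_forall fun b hb => ?_)
    have hρ9 : ‖a - b‖ < 9 * r₀ := by
      rw [mem_ball] at ha hb
      have := dist_triangle_right a b a₀
      rw [← dist_eq_norm]; linarith
    have s1 := size_bound hn1 hμ hH hB hT ha6 hb
    rw [indicator_of_mem (show ‖a - b‖ ∈ Iio (9 * r₀) from hρ9), norm_mul, Real.norm_eq_abs]
    calc _ ≤ (n * μ ^ n * H * ‖a - b‖ ^ (γ - n)) * F :=
          mul_le_mul s1 (hfF b) (abs_nonneg _) ((abs_nonneg _).trans s1)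
      _ = _ := by ring

lemma oddPart_integral (n : ℕ) (A : E →L[ℝ] V) (y s r : ℝ) (w : V) (a' : E) :
    ∫ b, oddPart n A y s r w (a' - b) ∂ν = 0 := by
  rw [integral_sub_left_eq_self (oddPart n A y s r w) ν a']
  have h : ∫ x, oddPart n A y s r w (-x) ∂ν = ∫ x, oddPart n A y s r w x ∂ν :=
    integral_neg_eq_self _ ν
  simp only [oddPart_neg, integral_neg] at h
  linarith

lemma oddPart_integrable (n : ℕ) (A : E →L[ℝ] V) (y r : ℝ) {s c : ℝ} (hs : 0 < s) (hc : 0 < c)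
    (hA : ∀ v, c * ‖v‖ ≤ ‖A v‖) (w : V) (a' : E) :
    Integrable (fun b => oddPart n A y s r w (a' - b)) ν := by
  refine Integrable.comp_sub_left (f := oddPart n A y s r w) ?_ a'
  have hbound : Integrable ((ball (0:E) r).indicator
      (fun _ => |2 - ((n + 1 : ℕ):ℝ)| * (|y| * ((c * s)⁻¹ ^ n * ‖w‖)))) ν :=
    (integrable_indicator_iff measurableSet_ball).2
      (integrableOn_const (by exact measure_ball_lt_top.ne))
  refine hbound.mono' ?_ (Filter.Eventually.of_forall fun x => ?_)
  · apply Measurable.aestronglyMeasurable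
    unfold oddPart
    refine Measurable.ite ?_ ?_ measurable_const
    · exact (measurableSet_le measurable_const measurable_norm).inter
        (measurableSet_lt measurable_norm measurable_const)
    · simp only [ker, real_inner_smul_left]
      have h1 : Measurable fun x => ‖A x‖ := (A.continuous.norm).measurable
      have h2 : Measurable fun x => ⟪A x, w⟫ :=
        (A.continuous.inner continuous_const).measurable
      exact (((h1.inv.pow_const _).mul h2).const_mul _).const_mul _
  · unfold oddPart
    split_ifs with h
    · rw [indicator_of_mem (show x ∈ ball (0:E) r by simpa using h.2), norm_mul, norm_mul]
      simp only [Real.norm_eq_abs]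
      gcongr
      refine (abs_real_inner_le_norm _ _).trans ?_
      gcongr
      apply norm_ker n (by positivity)
      exact le_trans (by gcongr; exact h.1) (hA x)
    · rw [norm_zero]
      exact indicator_apply_nonneg fun _ => by positivity

theorem core {n : ℕ} (hn : Module.finrank ℝ E = n) {μ L H γ r₀ : ℝ}
    (hγ : γ ∈ Ioo (0:ℝ) 1) (hμ : 1 ≤ μ) (hL : 0 < L) (hH : 0 < H) (hr₀ : 0 < r₀) :
    ∃ C₀ : ℝ, ∀ {F Hf : ℝ} {a₀ : E} {Z T : E → V} (hTm : StronglyMeasurable T)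
    (hZ : ∀ a ∈ ball a₀ (6 * r₀), DifferentiableAt ℝ Z a)
    (hB : ∀ a ∈ ball a₀ (6 * r₀), ∀ b ∈ ball a₀ (6 * r₀),
      μ⁻¹ * ‖a - b‖ ≤ ‖Z a - Z b‖ ∧ ‖Z a - Z b‖ ≤ L * ‖a - b‖)
    (hD : ∀ a ∈ ball a₀ (6 * r₀), ∀ b ∈ ball a₀ (6 * r₀),
      ‖fderiv ℝ Z a - fderiv ℝ Z b‖ ≤ H * ‖a - b‖ ^ γ)
    (hT : ∀ a ∈ ball a₀ (6 * r₀), ∀ b ∈ ball a₀ (6 * r₀), ‖T a - T b‖ ≤ H * ‖a - b‖ ^ γ)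
    {f : E → ℝ} (hfF : ∀ b, |f b| ≤ F) (hfH : ∀ b b', |f b - f b'| ≤ Hf * ‖b - b'‖ ^ γ),
    (∀ a ∈ ball a₀ (3 * r₀), IntegrableOn
      (fun b => (2 - ((n + 1 : ℕ):ℝ)) * ⟪ker (n + 1) (Z a - Z b), T a - T b⟫ * f b)
      (ball a₀ (6 * r₀)) ν) ∧
    (∀ a ∈ ball a₀ (3 * r₀), ∀ a' ∈ ball a₀ (3 * r₀),
      |(∫ b in ball a₀ (6 * r₀),
        (2 - ((n + 1 : ℕ):ℝ)) * ⟪ker (n + 1) (Z a - Z b), T a - T b⟫ * f b ∂ν) -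
      ∫ b in ball a₀ (6 * r₀),
        (2 - ((n + 1 : ℕ):ℝ)) * ⟪ker (n + 1) (Z a' - Z b), T a' - T b⟫ * f b ∂ν|
      ≤ C₀ * (F + Hf) * ‖a - a'‖ ^ γ) := by
  have hn1 : 1 ≤ n := hn ▸ Module.finrank_pos
  have hμ0 : 0 < μ := by linarith
  refine ⟨n * μ ^ n * H * (n * ν.real (ball 0 1) * (3 ^ γ / γ)) * 2
    + n * ((n + 2) * (2 * μ) ^ (n + 1) * L * (2 * H)) * (n * ν.real (ball 0 1) * (1 / (1 - γ)))
    + n * (μ ^ n + (n + 2) * μ ^ (n + 1) * H + μ ^ n * ((3 * r₀) ^ γ)⁻¹) * H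
      * (n * ν.real (ball 0 1) * ((9 * r₀) ^ γ / γ)), ?_⟩
  intro F Hf a₀ Z T hTm hZ hB hD hT f hfF hfH
  have hF : 0 ≤ F := (abs_nonneg _).trans (hfF 0)
  have hHf : 0 ≤ Hf := by
    obtain ⟨x, hx⟩ := exists_ne (0:E)
    have h := (abs_nonneg _).trans (hfH x 0)
    rw [sub_zero] at h
    exact nonneg_of_mul_nonneg_left h (Real.rpow_pos_of_pos (norm_pos_iff.2 hx) _)
  have hfc := cont_of_holder hγ.1 hfH
  have hB1 := fun x hx y hy => (hB x hx y hy).1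
  have hI := fun a (ha : a ∈ ball a₀ (3 * r₀)) =>
    kernel_integrable ν hn hγ hμ hH hr₀ hTm hZ hB1 hT hfF hfc ha
  refine ⟨hI, fun a ha a' ha' => ?_⟩
  rcases eq_or_ne a a' with rfl | hne
  · simp [Real.zero_rpow hγ.1.ne']
  have hδ : 0 < ‖a - a'‖ := norm_pos_iff.2 (sub_ne_zero.2 hne)
  have ha6 : a ∈ ball a₀ (6 * r₀) := ball_subset_ball (by linarith) ha
  have ha6' : a' ∈ ball a₀ (6 * r₀) := ball_subset_ball (by linarith) ha'
  have hoi := (oddPart_integrable ν n (fderiv ℝ Z a') (f a') (3 * r₀) (s := 2 * ‖a - a'‖)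
    (by positivity) (inv_pos.2 hμ0) (fderiv_lower hZ hB1 ha6') (T a - T a') a')
  have ho0 : ∫ b in ball a₀ (6 * r₀), oddPart n (fderiv ℝ Z a') (f a') (2 * ‖a - a'‖) (3 * r₀)
      (T a - T a') (a' - b) ∂ν = 0 := by
    rw [setIntegral_eq_integral_of_forall_compl_eq_zero, oddPart_integral]
    intro b hb
    refine if_neg fun h => hb ?_
    have h2 := h.2
    rw [mem_ball] at ha' ⊢
    rw [← dist_eq_norm] at h2
    have := dist_triangle_left b a₀ a'
    linarith
  obtain ⟨j1, k1⟩ := near_int ν hn hγ.1 (R := 3 * ‖a - a'‖) (by positivity) a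
  obtain ⟨j2, k2⟩ := near_int ν hn hγ.1 (R := 3 * ‖a - a'‖) (by positivity) a'
  obtain ⟨j3, k3⟩ := far_int ν hn hγ.2 (R := ‖a - a'‖) (by positivity) a'
  obtain ⟨j4, k4⟩ := near_int ν hn hγ.1 (R := 9 * r₀) (by positivity) a'
  have j1' := j1.const_mul (n * μ ^ n * H * F)
  have j2' := j2.const_mul (n * μ ^ n * H * F)
  have j3' := j3.const_mul (n * ((n + 2) * (2 * μ) ^ (n + 1) * L * (2 * H)) * F * ‖a - a'‖)
  have j4' := j4.const_mul (n * (μ ^ n + (n + 2) * μ ^ (n + 1) * H + μ ^ n * ((3 * r₀) ^ γ)⁻¹)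
    * H * (F + Hf) * ‖a - a'‖ ^ γ)
  have hGi := ((j1'.add j2').add j3').add j4'
  have hGv := integral_add' ((j1'.add j2').add j3') j4'
  rw [integral_add' (j1'.add j2') j3', integral_add' j1' j2'] at hGv
  simp only [integral_const_mul, k1, k2, k3, k4] at hGv
  have hmain : (∫ b in ball a₀ (6 * r₀),
        (2 - ((n + 1 : ℕ):ℝ)) * ⟪ker (n + 1) (Z a - Z b), T a - T b⟫ * f b ∂ν) -
      ∫ b in ball a₀ (6 * r₀),
        (2 - ((n + 1 : ℕ):ℝ)) * ⟪ker (n + 1) (Z a' - Z b), T a' - T b⟫ * f b ∂ν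
      = ∫ b in ball a₀ (6 * r₀),
        ((2 - ((n + 1 : ℕ):ℝ)) * ⟪ker (n + 1) (Z a - Z b), T a - T b⟫ * f b
        - (2 - ((n + 1 : ℕ):ℝ)) * ⟪ker (n + 1) (Z a' - Z b), T a' - T b⟫ * f b
        - oddPart n (fderiv ℝ Z a') (f a') (2 * ‖a - a'‖) (3 * r₀) (T a - T a') (a' - b)) ∂ν := by
    have w1 := integral_sub (hI a ha) (hI a' ha')
    have w2 := integral_sub ((hI a ha).sub (hI a' ha')) (hoi.integrableOn (s := ball a₀ (6 * r₀)))
    simp only [Pi.sub_apply] at w2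
    rw [w2, ho0, sub_zero, w1]
  rw [hmain]
  rw [← Real.norm_eq_abs]
  refine (norm_integral_le_of_norm_le (μ := ν.restrict (ball a₀ (6 * r₀))) hGi.integrableOn
    ((ae_restrict_iff' measurableSet_ball).2 (Filter.Eventually.of_forall fun b hb =>
      combine hn1 hγ hμ hL hH hr₀ hF hHf hZ hB hD hT hfF hfH ha6 ha' hb hδ))).trans ?_
  have hnn : ∀ b : E, ∀ S : Set ℝ, ∀ p : ℝ, 0 ≤ S.indicator (fun t : ℝ => t ^ p) ‖b‖ :=
    fun b S p => indicator_apply_nonneg fun _ => Real.rpow_nonneg (norm_nonneg _) _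
  have hδg : 0 ≤ ‖a - a'‖ ^ γ := Real.rpow_nonneg (norm_nonneg _) _
  have h3g : 0 ≤ ((3 * r₀) ^ γ)⁻¹ := inv_nonneg.2 (Real.rpow_nonneg (by linarith) _)
  refine (setIntegral_le_integral hGi (Filter.Eventually.of_forall fun b => ?_)).trans ?_
  · have n1 := hnn (a - b) (Iio (3 * ‖a - a'‖)) (γ - n)
    have n2 := hnn (a' - b) (Iio (3 * ‖a - a'‖)) (γ - n)
    have n3 := hnn (a' - b) (Ioi ‖a - a'‖) (γ - n - 1)
    have n4 := hnn (a' - b) (Iio (9 * r₀)) (γ - n)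
    simp only [Pi.zero_apply, Pi.add_apply]
    positivity
  · refine (le_of_eq hGv).trans ?_
    have e1 : (3 * ‖a - a'‖) ^ γ = 3 ^ γ * ‖a - a'‖ ^ γ := Real.mul_rpow (by norm_num) hδ.le
    have e2 : ‖a - a'‖ ^ (γ - 1) = ‖a - a'‖ ^ γ / ‖a - a'‖ := by
      rw [Real.rpow_sub hδ, Real.rpow_one]
    rw [e1, e2]
    have hFle : F ≤ F + Hf := by linarith
    have hv : 0 ≤ ν.real (ball (0:E) 1) := measureReal_nonneg
    have h1γ : 0 < 1 - γ := by linarith [hγ.2]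
    have h0γ : 0 < γ := hγ.1
    have h3 : (0:ℝ) ≤ 3 ^ γ := Real.rpow_nonneg (by norm_num) _
    set P := n * μ ^ n * H * (n * ν.real (ball 0 1) * (3 ^ γ / γ)) * 2
    set Q := n * ((n + 2) * (2 * μ) ^ (n + 1) * L * (2 * H)) *
      (n * ν.real (ball 0 1) * (1 / (1 - γ)))
    set S := n * (μ ^ n + (n + 2) * μ ^ (n + 1) * H + μ ^ n * ((3 * r₀) ^ γ)⁻¹) * H
      * (n * ν.real (ball 0 1) * ((9 * r₀) ^ γ / γ))
    have hP : 0 ≤ P := by positivity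
    have hQ : 0 ≤ Q := by positivity
    calc _ = P * F * ‖a - a'‖ ^ γ + Q * F * ‖a - a'‖ ^ γ + S * (F + Hf) * ‖a - a'‖ ^ γ := by
          simp only [P, Q, S]
          field_simp
          ring
      _ ≤ P * (F + Hf) * ‖a - a'‖ ^ γ + Q * (F + Hf) * ‖a - a'‖ ^ γ
          + S * (F + Hf) * ‖a - a'‖ ^ γ := by gcongr
      _ = _ := by ring

end core
end ChartComm

/-- Hölder bound for the chart commutator operator. -/
theorem chart_commutator_holder_bound
    (d : ℕ) (hd : 3 ≤ d) (γ : ℝ) (hγ : γ ∈ Set.Ioo (0:ℝ) 1)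
    (μ L H r₀ : ℝ) (hμ : 1 ≤ μ) (hL : 0 < L) (hH : 0 < H) (hr₀ : 0 < r₀) :
    ∃ C₀ : ℝ, ∀ (a₀ : EuclideanSpace ℝ (Fin (d - 1)))
      (Z : EuclideanSpace ℝ (Fin (d - 1)) → EuclideanSpace ℝ (Fin d)),
      (∀ a ∈ Metric.ball a₀ (6 * r₀), DifferentiableAt ℝ Z a) →
      (∀ a ∈ Metric.ball a₀ (6 * r₀), ∀ b ∈ Metric.ball a₀ (6 * r₀),
        μ⁻¹ * ‖a - b‖ ≤ ‖Z a - Z b‖ ∧ ‖Z a - Z b‖ ≤ L * ‖a - b‖) →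
      (∀ a ∈ Metric.ball a₀ (6 * r₀), ∀ b ∈ Metric.ball a₀ (6 * r₀),
        ‖fderiv ℝ Z a - fderiv ℝ Z b‖ ≤ H * ‖a - b‖ ^ γ) →
      ∀ j : Fin (d - 1),
      ∀ (f : EuclideanSpace ℝ (Fin (d - 1)) → ℝ) (F Hf : ℝ),
        Function.support f ⊆ Metric.ball a₀ (3 * r₀) →
        (∀ b, |f b| ≤ F) →
        (∀ b b', |f b - f b'| ≤ Hf * ‖b - b'‖ ^ γ) →
        (∀ a ∈ Metric.ball a₀ (3 * r₀),
          IntegrableOn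
            (fun b =>
              ((2 - (d:ℝ)) * ⟪Z a - Z b,
                  fderiv ℝ Z a (EuclideanSpace.single j 1)
                    - fderiv ℝ Z b (EuclideanSpace.single j 1)⟫
                / ‖Z a - Z b‖ ^ d) * f b)
            (Metric.ball a₀ (6 * r₀)) volume) ∧
        (∀ a ∈ Metric.ball a₀ (3 * r₀), ∀ a' ∈ Metric.ball a₀ (3 * r₀),
          |(∫ b in Metric.ball a₀ (6 * r₀),
              ((2 - (d:ℝ)) * ⟪Z a - Z b,
                  fderiv ℝ Z a (EuclideanSpace.single j 1)
                    - fderiv ℝ Z b (EuclideanSpace.single j 1)⟫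
                / ‖Z a - Z b‖ ^ d) * f b) -
            ∫ b in Metric.ball a₀ (6 * r₀),
              ((2 - (d:ℝ)) * ⟪Z a' - Z b,
                  fderiv ℝ Z a' (EuclideanSpace.single j 1)
                    - fderiv ℝ Z b (EuclideanSpace.single j 1)⟫
                / ‖Z a' - Z b‖ ^ d) * f b|
            ≤ C₀ * (F + Hf) * ‖a - a'‖ ^ γ) := by
  obtain ⟨n, rfl⟩ : ∃ n, d = n + 1 := ⟨d - 1, by omega⟩
  have hn1 : 1 ≤ n := by omega
  have : Nonempty (Fin (n + 1 - 1)) := ⟨⟨0, by omega⟩⟩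
  obtain ⟨C₀, hC⟩ := ChartComm.core (E := EuclideanSpace ℝ (Fin (n + 1 - 1)))
    (V := EuclideanSpace ℝ (Fin (n + 1))) volume (n := n) (by simp) hγ hμ hL hH hr₀
  refine ⟨C₀, fun a₀ Z hZ hB hD j f F Hf _ hfF hfH => ?_⟩
  simp only [ChartComm.inner_div_eq]
  refine hC (T := fun a => fderiv ℝ Z a (EuclideanSpace.single j 1)) ?_ hZ hB hD ?_ hfF hfH
  · exact (measurable_fderiv_apply_const ℝ Z _).stronglyMeasurable
  · intro a ha b hb
    rw [← ContinuousLinearMap.sub_apply]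
    refine (ContinuousLinearMap.le_opNorm _ _).trans ?_
    rw [EuclideanSpace.norm_single, norm_one, mul_one]
    exact hD a ha b hb
end
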